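/- arXiv:1712.06268 — 2 statements merged into one kernel-verified Lean document; each statement's English description precedes it below -/
import Mathlib

section
/- Suppose g is twice continuously differentiable (C²). Then the set Σ ∪ T₁ ⊂ ℝⁿ × (0,∞) has at most countably many path-connected components; equivalently, Σ ∪ T₁ is the union of an at most countable, pairwise disjoint family of nonempty path-connected sets, each a path component of Σ ∪ T₁. -/
open scoped InnerProductSpace Topology ENNReal
open Filter

noncomputable section

/-- Euclidean space `ℝⁿ`. -/
abbrev Euc (n : ℕ) := EuclideanSpace ℝ (Fin n)

/-- Hopf–Lax solution of the Eikonal equation `uₜ + |∇u| = 0` with initial data `g`: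
`u(x,t) = min {g(y) : |y - x| ≤ t}`. -/
def HLu {n : ℕ} (g : Euc n → ℝ) (x : Euc n) (t : ℝ) : ℝ :=
  sInf (g '' Metric.closedBall x t)

/-- The set of minimizers `L(x,t) = {y : |y - x| ≤ t ∧ g y = u(x,t)}`. -/
def HLL {n : ℕ} (g : Euc n → ℝ) (x : Euc n) (t : ℝ) : Set (Euc n) :=
  {y | ‖y - x‖ ≤ t ∧ g y = HLu g x t}

/-- The characteristic from `y₀`: `X(y₀,t) = y₀ + t • Dg(y₀)/|Dg(y₀)|`. -/
def charX {n : ℕ} (Dg : Euc n → Euc n) (y₀ : Euc n) (t : ℝ) : Euc n :=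
  y₀ + t • (‖Dg y₀‖⁻¹ • Dg y₀)

/-- First termination time `t̄ₛ(y₀) = sup {t > 0 : L(X(y₀,t),t) = {y₀}}`, in `[0,∞]`
(`sup ∅ = 0`). -/
def tbar {n : ℕ} (g : Euc n → ℝ) (Dg : Euc n → Euc n) (y₀ : Euc n) : ℝ≥0∞ :=
  sSup (ENNReal.ofReal '' {t : ℝ | 0 < t ∧ HLL g (charX Dg y₀ t) t = {y₀}})

/-- Second termination time `tₛ(y₀) = inf {t > 0 : y₀ ∉ L(X(y₀,t),t)}`, in `[0,∞]`
(`inf ∅ = ∞`). -/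
def tsnd {n : ℕ} (g : Euc n → ℝ) (Dg : Euc n → Euc n) (y₀ : Euc n) : ℝ≥0∞ :=
  sInf (ENNReal.ofReal '' {t : ℝ | 0 < t ∧ y₀ ∉ HLL g (charX Dg y₀ t) t})

/-- The set `Σ` of points of `ℝⁿ × (0,∞)` at which `u` is not Fréchet differentiable. -/
def SigmaSet {n : ℕ} (g : Euc n → ℝ) : Set (Euc n × ℝ) :=
  {p | 0 < p.2 ∧ ¬ DifferentiableAt ℝ (fun q : Euc n × ℝ => HLu g q.1 q.2) p}

/-- `T(M)`: the set of termination points of characteristics from points with `Dg ≠ 0`. -/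
def TM {n : ℕ} (g : Euc n → ℝ) (Dg : Euc n → Euc n) : Set (Euc n × ℝ) :=
  {p | ∃ y₀ : Euc n, ∃ t : ℝ, Dg y₀ ≠ 0 ∧ tbar g Dg y₀ < ⊤ ∧ 0 < t ∧
    tbar g Dg y₀ ≤ ENNReal.ofReal t ∧ ENNReal.ofReal t ≤ tsnd g Dg y₀ ∧
    p = (charX Dg y₀ t, t)}

/-- `T₁`: the points of `T(M)` having a unique minimizer. -/
def T1 {n : ℕ} (g : Euc n → ℝ) (Dg : Euc n → Euc n) : Set (Euc n × ℝ) :=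
  {p ∈ TM g Dg | ∃ y : Euc n, HLL g p.1 p.2 = {y}}

/-!
Away from critical points of `g`, a minimizer `y ∈ L(x,t)` determines `x`: the ball `B̄(x,t)` must
be the one of radius `t` that touches the level set of `g` at `y` from above, its centre being
`X(y,t)`. Hence `Σ ∪ T₁ = T(M)`, which is the image, under a continuous map, of the set of pairs
`(y,t)` with `y ∈ M` and `t̄ₛ(y) ≤ t ≤ tₛ(y)`. It suffices to join each such pair to one of
countably many.

A second-order expansion shows that both termination times tend to `tₛ(y₀)` when `y → y₀` through
`{g < g y₀}`, and to `t̄ₛ(y₀)` when `y → y₀` through `{g > g y₀}`. Along a curve on which `g`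
increases strictly, the region between their graphs is therefore a continuous curve with at most
countably many vertical segments, and can be traversed continuously. Near a point where `Dg ≠ 0`,
all short segments to a common point `c` in the direction of `Dg` are such curves, and the Lindelöf
property leaves countably many `c`.
-/

open Set Metric NormedSpace
open scoped Gradient

/-! ### Balls touching a level set -/

section CriticalRadius

/-- The critical radius of a property `P` of positive radii: the supremum of those at which `P`
holds. As a supremum in `ℝ`, it is `0` both when `P` never holds and when the radii at which `P`
holds are unbounded; the latter case is excluded below by a hypothesis `¬ P T`. -/
def criticalRadius (P : ℝ → Prop) : ℝ := sSup {s | 0 < s ∧ P s}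

variable {P Q : ℝ → Prop} {s T : ℝ}

lemma criticalRadius_nonneg : 0 ≤ criticalRadius P :=
  Real.sSup_nonneg fun _ hs => hs.1.le

lemma le_criticalRadius (hP : Antitone P) (hT : ¬ P T) (hs : 0 < s) (h : P s) :
    s ≤ criticalRadius P := by
  refine le_csSup ⟨T, fun r hr => ?_⟩ ⟨hs, h⟩
  exact le_of_not_ge fun hTr => hT (hP hTr hr.2)

lemma of_lt_criticalRadius (hP : Antitone P) (hs : 0 ≤ s) (h : s < criticalRadius P) : P s := by
  have hne : {r | 0 < r ∧ P r}.Nonempty := by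
    by_contra hempty
    rw [criticalRadius, not_nonempty_iff_eq_empty.1 hempty, Real.sSup_empty] at h
    exact hs.not_gt h
  obtain ⟨r, ⟨-, hr⟩, hsr⟩ := exists_lt_of_lt_csSup hne h
  exact hP hsr.le hr

lemma criticalRadius_mono (hP : Antitone P) (hT : ¬ P T) (hQP : ∀ s, Q s → P s) :
    criticalRadius Q ≤ criticalRadius P :=
  Real.sSup_le (fun _ hs => le_criticalRadius hP hT hs.1 (hQP _ hs.2)) criticalRadius_nonneg

lemma criticalRadius_le_iff (hP : Antitone P) (hs : 0 ≤ s) :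
    ((∃ r, ¬ P r) ∧ criticalRadius P ≤ s) ↔ ∀ r, s < r → ¬ P r := by
  refine ⟨fun ⟨⟨T, hT⟩, hle⟩ r hsr hr => ?_, fun h => ⟨⟨s + 1, h _ (lt_add_one s)⟩, ?_⟩⟩
  · exact hsr.not_ge ((le_criticalRadius hP hT (hs.trans_lt hsr) hr).trans hle)
  · exact Real.sSup_le (fun r hr => le_of_not_gt fun hsr => h r hsr hr.2) hs

end CriticalRadius

section TangentBall

variable {E : Type*} [NormedAddCommGroup E] [InnerProductSpace ℝ E] [CompleteSpace E]
  {g : E → ℝ} {y z : E} {s s' : ℝ}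

/-- The unit vector in the direction of the gradient of `g`, and `0` at the critical points. -/
def gradDir (g : E → ℝ) (y : E) : E := normalize (∇ g y)

/-- The ball of radius `s` that touches the level set of `g` through `y` at `y`, on the side to
which `g` increases. The characteristic from `y` is at its centre at time `s`. -/
def tangentBall (g : E → ℝ) (y : E) (s : ℝ) : Set E := closedBall (y + s • gradDir g y) s

/-- The point `y` minimizes `g` on the tangent ball of radius `s` at `y`. -/
def IsTangentMin (g : E → ℝ) (y : E) (s : ℝ) : Prop := ∀ z ∈ tangentBall g y s, g y ≤ g z

/-- The point `y` is the only minimizer of `g` on the tangent ball of radius `s` at `y`. -/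
def IsStrictTangentMin (g : E → ℝ) (y : E) (s : ℝ) : Prop :=
  ∀ z ∈ tangentBall g y s, z ≠ y → g y < g z

lemma norm_smul_gradDir : ‖∇ g y‖ • gradDir g y = ∇ g y := norm_smul_normalize _

lemma norm_gradDir (h : ∇ g y ≠ 0) : ‖gradDir g y‖ = 1 := norm_normalize h

lemma norm_gradDir_le_one : ‖gradDir g y‖ ≤ 1 := by
  by_cases h : ∇ g y = 0
  · simp [gradDir, h]
  · exact (norm_gradDir h).le

lemma inner_gradient_eq (v : E) : ⟪∇ g y, v⟫_ℝ = ‖∇ g y‖ * ⟪gradDir g y, v⟫_ℝ := by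
  rw [← real_inner_smul_left, norm_smul_gradDir]

lemma continuousAt_gradDir (hg : ContinuousAt (∇ g) y) (h : ∇ g y ≠ 0) :
    ContinuousAt (gradDir g) y :=
  (hg.norm.inv₀ (norm_ne_zero_iff.2 h)).smul hg

lemma mem_tangentBall_iff (h : ∇ g y ≠ 0) (hs : 0 ≤ s) :
    z ∈ tangentBall g y s ↔ ‖z - y‖ ^ 2 ≤ 2 * s * ⟪gradDir g y, z - y⟫_ℝ := by
  rw [tangentBall, mem_closedBall, dist_eq_norm, ← sub_sub, ← sq_le_sq₀ (norm_nonneg _) hs,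
    norm_sub_sq_real, norm_smul, norm_gradDir h, real_inner_smul_right, real_inner_comm,
    Real.norm_eq_abs, mul_one, sq_abs]
  constructor <;> intro h <;> linarith

lemma self_mem_tangentBall (hs : 0 ≤ s) : y ∈ tangentBall g y s := by
  rw [tangentBall, mem_closedBall, dist_self_add_right, norm_smul, Real.norm_of_nonneg hs]
  exact mul_le_of_le_one_right hs norm_gradDir_le_one

lemma tangentBall_mono : Monotone (tangentBall g y) := fun s s' h => by
  refine closedBall_subset_closedBall' ?_
  rw [dist_add_left, dist_eq_norm, ← sub_smul, norm_smul, Real.norm_of_nonpos (by linarith)]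
  nlinarith [norm_gradDir_le_one (g := g) (y := y)]

lemma dist_le_of_mem_tangentBall (hz : z ∈ tangentBall g y s) : dist z y ≤ 2 * s := by
  have hs : 0 ≤ s := dist_nonneg.trans hz
  exact (dist_le_diam_of_mem isBounded_closedBall hz (self_mem_tangentBall hs)).trans
    (diam_closedBall hs)

lemma inner_gradDir_pos (h : ∇ g y ≠ 0) (hs : 0 < s) (hz : z ∈ tangentBall g y s) (hne : z ≠ y) :
    0 < ⟪gradDir g y, z - y⟫_ℝ := by
  have hnorm : 0 < ‖z - y‖ ^ 2 := pow_pos (norm_pos_iff.2 (sub_ne_zero.2 hne)) 2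
  exact pos_of_mul_pos_right (hnorm.trans_le ((mem_tangentBall_iff h hs.le).1 hz)) (by positivity)

lemma norm_sub_sq_lt_of_mem_tangentBall (h : ∇ g y ≠ 0) (hs : 0 < s) (hss : s < s')
    (hz : z ∈ tangentBall g y s) (hne : z ≠ y) :
    ‖z - y‖ ^ 2 < 2 * s' * ⟪gradDir g y, z - y⟫_ℝ := by
  have hpos := inner_gradDir_pos h hs hz hne
  refine ((mem_tangentBall_iff h hs.le).1 hz).trans_lt ?_
  gcongr

lemma IsStrictTangentMin.isTangentMin (h : IsStrictTangentMin g y s) : IsTangentMin g y s :=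
  fun z hz => by
    rcases eq_or_ne z y with rfl | hne
    · exact le_rfl
    · exact (h z hz hne).le

lemma antitone_isTangentMin : Antitone (IsTangentMin g y) :=
  fun _ _ hss h z hz => h z (tangentBall_mono hss hz)

lemma antitone_isStrictTangentMin : Antitone (IsStrictTangentMin g y) :=
  fun _ _ hss h z hz => h z (tangentBall_mono hss hz)

lemma isTangentMin_of_forall_lt (hg : Continuous g) (hs : 0 < s)
    (h : ∀ r, 0 < r → r < s → IsTangentMin g y r) : IsTangentMin g y s := by
  intro z hz
  have hlim : Tendsto (fun r : ℝ => g (y + r • (z - y))) (𝓝[<] 1) (𝓝 (g z)) := by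
    have hcont : Continuous fun r : ℝ => g (y + r • (z - y)) := by fun_prop
    simpa using (hcont.tendsto 1).mono_left nhdsWithin_le_nhds
  refine ge_of_tendsto hlim ?_
  filter_upwards [Ioo_mem_nhdsLT (zero_lt_one' ℝ)] with r hr
  refine h (r * s) (mul_pos hr.1 hs) (mul_lt_of_lt_one_left hs hr.2) _ ?_
  rw [tangentBall, mem_closedBall, dist_eq_norm] at hz ⊢
  calc ‖y + r • (z - y) - (y + (r * s) • gradDir g y)‖
      = ‖r • (z - (y + s • gradDir g y))‖ := by congr 1; module
    _ ≤ r * s := by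
      rw [norm_smul, Real.norm_of_nonneg hr.1.le]
      exact mul_le_mul_of_nonneg_left hz hr.1.le

end TangentBall

/-! ### Second-order conditions -/

section SecondOrder

open Asymptotics

variable {E : Type*} [NormedAddCommGroup E] [InnerProductSpace ℝ E]

lemma le_inner_map_self_of_orthogonal {ν : E} (hν : ‖ν‖ = 1) {H : E →L[ℝ] E} {κ : ℝ} (hκ : 0 ≤ κ)
    (hH : ∀ v, ⟪ν, v⟫_ℝ = 0 → -κ * ‖v‖ ^ 2 ≤ ⟪H v, v⟫_ℝ) (h : E) :
    -κ * ‖h‖ ^ 2 - 2 * ‖H‖ * |⟪ν, h⟫_ℝ| * ‖h‖ ≤ ⟪H h, h⟫_ℝ := by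
  set σ := ⟪ν, h⟫_ℝ
  set v := h - σ • ν with hv
  have hort : ⟪ν, v⟫_ℝ = 0 := by
    rw [hv, inner_sub_right, real_inner_smul_right, real_inner_self_eq_norm_sq, hν]; ring
  have hvh : ‖v‖ ^ 2 + σ ^ 2 = ‖h‖ ^ 2 := by
    rw [hv, norm_sub_sq_real, norm_smul, real_inner_smul_right, real_inner_comm, hν,
      Real.norm_eq_abs, mul_one, sq_abs]
    ring
  have hvle : ‖v‖ ≤ ‖h‖ := by
    rw [← sq_le_sq₀ (norm_nonneg _) (norm_nonneg _)]; nlinarith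
  have hσ : ‖σ • ν‖ = |σ| := by rw [norm_smul, hν, mul_one, Real.norm_eq_abs]
  have hsplit : ⟪H h, h⟫_ℝ = ⟪H v, v⟫_ℝ + ⟪H (σ • ν), h⟫_ℝ + ⟪H v, σ • ν⟫_ℝ := by
    have : h = v + σ • ν := by rw [hv]; abel
    conv_lhs => rw [this]
    conv_rhs => rw [this]
    simp only [map_add, inner_add_left, inner_add_right]; ring
  have hfirst : -(‖H‖ * |σ| * ‖h‖) ≤ ⟪H (σ • ν), h⟫_ℝ := by
    refine (neg_le_neg ?_).trans (neg_le_of_abs_le (abs_real_inner_le_norm _ _))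
    gcongr
    exact hσ ▸ H.le_opNorm _
  have hsecond : -(‖H‖ * ‖h‖ * |σ|) ≤ ⟪H v, σ • ν⟫_ℝ := by
    refine (neg_le_neg ?_).trans (neg_le_of_abs_le (abs_real_inner_le_norm _ _))
    rw [hσ]
    gcongr
    exact (H.le_opNorm _).trans (by gcongr)
  have hvsq : κ * ‖v‖ ^ 2 ≤ κ * ‖h‖ ^ 2 := by gcongr
  linarith [hH v hort]

lemma le_half_inner_map_self_of_norm_sq_le {ν ν' h : E} (hν : ‖ν‖ = 1) {H : E →L[ℝ] E} {κ s ε : ℝ}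
    (hκ : 0 ≤ κ) (hH : ∀ v, ⟪ν, v⟫_ℝ = 0 → -κ * ‖v‖ ^ 2 ≤ ⟪H v, v⟫_ℝ) (hνν' : ‖ν - ν'‖ ≤ ε)
    (hh : ‖h‖ ≤ ε) (hτ : 0 ≤ ⟪ν', h⟫_ℝ) (hball : ‖h‖ ^ 2 ≤ 2 * s * ⟪ν', h⟫_ℝ) :
    -(κ * s + ε * ‖H‖ * (1 + 2 * s)) * ⟪ν', h⟫_ℝ ≤ 1 / 2 * ⟪H h, h⟫_ℝ := by
  set τ := ⟪ν', h⟫_ℝ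
  set σ := ⟪ν, h⟫_ℝ
  have hε : 0 ≤ ε := (norm_nonneg h).trans hh
  have hdiff : |σ - τ| ≤ ε * ‖h‖ := by
    rw [← inner_sub_left]
    exact (abs_real_inner_le_norm _ _).trans (by gcongr)
  have hσ : |σ| ≤ τ + ε * ‖h‖ := by
    have htri := abs_sub_abs_le_abs_sub σ τ
    rw [abs_of_nonneg hτ] at htri
    linarith
  have hcross : ‖H‖ * |σ| * ‖h‖ ≤ ‖H‖ * (τ * ε + ε * (2 * s * τ)) := by
    calc ‖H‖ * |σ| * ‖h‖ ≤ ‖H‖ * (τ + ε * ‖h‖) * ‖h‖ := by gcongr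
      _ = ‖H‖ * (τ * ‖h‖ + ε * ‖h‖ ^ 2) := by ring
      _ ≤ ‖H‖ * (τ * ε + ε * (2 * s * τ)) := by gcongr
  have hκh : κ * ‖h‖ ^ 2 ≤ κ * (2 * s * τ) := by gcongr
  linarith [le_inner_map_self_of_orthogonal hν hκ hH h]

variable [CompleteSpace E] {g : E → ℝ} {y y₀ z : E} {s κ : ℝ}

lemma contDiff_gradient (hg : ContDiff ℝ 2 g) : ContDiff ℝ 1 (∇ g) :=
  (InnerProductSpace.toDual ℝ E).symm.contDiff.comp (hg.fderiv_right (by norm_num))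

lemma hasDerivAt_comp_lineMap (hg : Differentiable ℝ g) (y z : E) (r : ℝ) :
    HasDerivAt (fun r : ℝ => g (AffineMap.lineMap y z r))
      ⟪∇ g (AffineMap.lineMap y z r), z - y⟫_ℝ r := by
  rw [inner_gradient_left]
  exact (hg _).hasFDerivAt.comp_hasDerivAt r AffineMap.hasDerivAt_lineMap

lemma abs_taylor_remainder_le (hg : Differentiable ℝ g) {H : E →L[ℝ] E} {ε : ℝ}
    (hε : 0 ≤ ε) (hH : ∀ x ∈ segment ℝ y z, ‖∇ g x - ∇ g y - H (x - y)‖ ≤ ε * ‖x - y‖) :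
    |g z - g y - ⟪∇ g y, z - y⟫_ℝ - 1 / 2 * ⟪H (z - y), z - y⟫_ℝ| ≤ ε * ‖z - y‖ ^ 2 := by
  set γ : ℝ → E := fun r => AffineMap.lineMap y z r with hγ
  let θ : ℝ → ℝ := fun r =>
    g (γ r) - r * ⟪∇ g y, z - y⟫_ℝ - r ^ 2 / 2 * ⟪H (z - y), z - y⟫_ℝ
  have hγy (r : ℝ) : γ r - y = r • (z - y) := by simp [hγ, AffineMap.lineMap_apply]
  have hθ (r : ℝ) : HasDerivAt θ ⟪∇ g (γ r) - ∇ g y - H (γ r - y), z - y⟫_ℝ r := by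
    refine (((hasDerivAt_comp_lineMap hg y z r).sub ((hasDerivAt_id r).mul_const _)).sub
      ((((hasDerivAt_id r).pow 2).div_const 2).mul_const _)).congr_deriv ?_
    simp only [hγy, inner_sub_left, map_smul, real_inner_smul_left, id_eq]
    push_cast
    ring
  have hbound (r : ℝ) (hr : r ∈ Ico (0 : ℝ) 1) :
      ‖⟪∇ g (γ r) - ∇ g y - H (γ r - y), z - y⟫_ℝ‖ ≤ ε * ‖z - y‖ ^ 2 := by
    have hmem : γ r ∈ segment ℝ y z := by
      rw [segment_eq_image_lineMap]; exact ⟨r, Ico_subset_Icc_self hr, rfl⟩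
    calc ‖⟪∇ g (γ r) - ∇ g y - H (γ r - y), z - y⟫_ℝ‖
        ≤ ‖∇ g (γ r) - ∇ g y - H (γ r - y)‖ * ‖z - y‖ := norm_inner_le_norm _ _
      _ ≤ ε * (r * ‖z - y‖) * ‖z - y‖ := by
        gcongr
        simpa only [hγy, norm_smul, Real.norm_of_nonneg hr.1] using hH _ hmem
      _ ≤ ε * (1 * ‖z - y‖) * ‖z - y‖ := by gcongr; exact hr.2.le
      _ = ε * ‖z - y‖ ^ 2 := by ring
  have hmvt := norm_image_sub_le_of_norm_deriv_le_segment_01'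
    (fun r _ => (hθ r).hasDerivWithinAt) hbound
  convert hmvt using 1
  simp only [θ, hγ, AffineMap.lineMap_apply_one, AffineMap.lineMap_apply_zero, Real.norm_eq_abs]
  ring_nf

lemma isLittleO_taylor_remainder (hg : ContDiff ℝ 2 g) (y₀ : E) :
    (fun p : E × E => g p.2 - g p.1 - ⟪∇ g p.1, p.2 - p.1⟫_ℝ
      - 1 / 2 * ⟪fderiv ℝ (∇ g) y₀ (p.2 - p.1), p.2 - p.1⟫_ℝ)
      =o[𝓝 (y₀, y₀)] fun p => ‖p.2 - p.1‖ ^ 2 := by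
  have hstrict : HasStrictFDerivAt (∇ g) (fderiv ℝ (∇ g) y₀) y₀ :=
    (contDiff_gradient hg).contDiffAt.hasStrictFDerivAt (by norm_num)
  refine isLittleO_iff.2 fun ε hε => ?_
  obtain ⟨δ, hδ, hball⟩ :=
    Metric.eventually_nhds_iff.1 ((hasStrictFDerivAt_iff_isLittleO.1 hstrict).def hε)
  filter_upwards [ball_mem_nhds _ hδ] with ⟨y, z⟩ hp
  rw [← ball_prod_same] at hp
  rw [Real.norm_of_nonneg (sq_nonneg _)]
  refine abs_taylor_remainder_le (hg.differentiable (by norm_num)) hε.le fun x hx => ?_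
  have hx₀ := (convex_ball y₀ δ).segment_subset hp.1 hp.2 hx
  exact hball (y := (x, y)) (max_lt hx₀ hp.1)

lemma tendsto_second_difference_quotient (hg : ContDiff ℝ 2 g) {w : ℝ → E} {v : E}
    (hw : Tendsto w (𝓝[≠] 0) (𝓝 v)) :
    Tendsto (fun t : ℝ => (g (y₀ + t • w t) - g y₀ - t * ⟪∇ g y₀, w t⟫_ℝ) / t ^ 2) (𝓝[≠] 0)
      (𝓝 (1 / 2 * ⟪fderiv ℝ (∇ g) y₀ v, v⟫_ℝ)) := by
  have hid : Tendsto (fun t : ℝ => t) (𝓝[≠] 0) (𝓝 0) := nhdsWithin_le_nhds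
  have hcurve : Tendsto (fun t : ℝ => (y₀, y₀ + t • w t)) (𝓝[≠] 0) (𝓝 (y₀, y₀)) := by
    simpa using (tendsto_const_nhds (x := y₀)).prodMk_nhds
      ((tendsto_const_nhds (x := y₀)).add (hid.smul hw))
  have hnorm : ((fun p : E × E => ‖p.2 - p.1‖ ^ 2) ∘ fun t : ℝ => (y₀, y₀ + t • w t))
      =O[𝓝[≠] 0] fun t => t ^ 2 := by
    simpa [Function.comp_def, norm_smul, mul_pow] using
      (isBigO_refl (fun t : ℝ => t ^ 2) (𝓝[≠] 0)).mul ((hw.norm.pow 2).isBigO_one ℝ)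
  have hrem := ((isLittleO_taylor_remainder hg y₀).comp_tendsto hcurve).trans_isBigO hnorm
  have hquad : Tendsto (fun t => 1 / 2 * ⟪fderiv ℝ (∇ g) y₀ (w t), w t⟫_ℝ) (𝓝[≠] 0)
      (𝓝 (1 / 2 * ⟪fderiv ℝ (∇ g) y₀ v, v⟫_ℝ)) :=
    ((((fderiv ℝ (∇ g) y₀).continuous.tendsto v).comp hw).inner hw).const_mul _
  have hsum := hquad.add hrem.tendsto_div_nhds_zero
  rw [add_zero] at hsum
  refine hsum.congr' ?_
  filter_upwards [self_mem_nhdsWithin] with t (ht : t ≠ 0)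
  simp only [Function.comp_apply, add_sub_cancel_left, map_smul, real_inner_smul_left,
    real_inner_smul_right]
  field_simp
  ring

lemma eventually_add_smul_mem_tangentBall (hD : ∇ g y₀ ≠ 0) (hs : 0 ≤ s) {v : E}
    (hv : ⟪gradDir g y₀, v⟫_ℝ = 0) {c : ℝ} (hc : ‖v‖ ^ 2 < 2 * s * c) :
    ∀ᶠ t : ℝ in 𝓝 0, y₀ + t • (v + (c * t) • gradDir g y₀) ∈ tangentBall g y₀ s := by
  have hcont : Continuous fun t : ℝ => ‖v‖ ^ 2 + (c * t) ^ 2 := by fun_prop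
  have hlt : ∀ᶠ t : ℝ in 𝓝 0, ‖v‖ ^ 2 + (c * t) ^ 2 < 2 * s * c :=
    hcont.continuousAt.eventually_lt_const (by simpa using hc)
  filter_upwards [hlt] with t ht
  have hnorm : ‖v + (c * t) • gradDir g y₀‖ ^ 2 = ‖v‖ ^ 2 + (c * t) ^ 2 := by
    rw [norm_add_sq_real, real_inner_smul_right, real_inner_comm, hv, norm_smul, norm_gradDir hD,
      Real.norm_eq_abs, mul_one, sq_abs]
    ring
  have hinner : ⟪gradDir g y₀, v + (c * t) • gradDir g y₀⟫_ℝ = c * t := by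
    rw [inner_add_right, hv, real_inner_smul_right, real_inner_self_eq_norm_sq, norm_gradDir hD]
    ring
  rw [mem_tangentBall_iff hD hs, add_sub_cancel_left, norm_smul, mul_pow, hnorm,
    real_inner_smul_right, hinner, Real.norm_eq_abs, sq_abs]
  nlinarith [sq_nonneg t]

-- Minimality is tested along `t ↦ y₀ + t v + c t² ν`, where `c > ‖v‖² / 2s`.
lemma IsTangentMin.le_inner_hessian (hg : ContDiff ℝ 2 g) (hD : ∇ g y₀ ≠ 0) (hs : 0 < s)
    (hmin : IsTangentMin g y₀ s) {v : E} (hv : ⟪gradDir g y₀, v⟫_ℝ = 0) :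
    -(‖∇ g y₀‖ / s) * ‖v‖ ^ 2 ≤ ⟪fderiv ℝ (∇ g) y₀ v, v⟫_ℝ := by
  set ν := gradDir g y₀ with hν
  have hG : 0 < ‖∇ g y₀‖ := norm_pos_iff.2 hD
  suffices htest : ∀ c, ‖v‖ ^ 2 / (2 * s) < c →
      0 ≤ 1 / 2 * ⟪fderiv ℝ (∇ g) y₀ v, v⟫_ℝ + ‖∇ g y₀‖ * c by
    have hle : -(1 / 2 * ⟪fderiv ℝ (∇ g) y₀ v, v⟫_ℝ) / ‖∇ g y₀‖ ≤ ‖v‖ ^ 2 / (2 * s) :=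
      le_of_forall_gt_imp_ge_of_dense fun c hc => by
        rw [div_le_iff₀ hG]; linarith [htest c hc]
    rw [div_le_iff₀ hG] at hle
    have : ‖v‖ ^ 2 / (2 * s) * ‖∇ g y₀‖ = ‖∇ g y₀‖ / s * ‖v‖ ^ 2 / 2 := by field_simp
    linarith
  intro c hc
  let w : ℝ → E := fun t => v + (c * t) • ν
  have hw : Tendsto w (𝓝[≠] 0) (𝓝 v) := by
    have : Continuous w := by fun_prop
    simpa [w] using (this.tendsto 0).mono_left nhdsWithin_le_nhds
  have hmem : ∀ᶠ t : ℝ in 𝓝[≠] 0, y₀ + t • w t ∈ tangentBall g y₀ s :=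
    (eventually_add_smul_mem_tangentBall hD hs.le hv
      ((div_lt_iff₀' (by positivity)).1 hc)).filter_mono nhdsWithin_le_nhds
  refine ge_of_tendsto ((tendsto_second_difference_quotient hg hw).add_const _) ?_
  filter_upwards [hmem, self_mem_nhdsWithin] with t ht (ht0 : t ≠ 0)
  have hlin : t * ⟪∇ g y₀, w t⟫_ℝ = ‖∇ g y₀‖ * c * t ^ 2 := by
    rw [inner_gradient_eq, ← hν, inner_add_right, hv, real_inner_smul_right,
      real_inner_self_eq_norm_sq, norm_gradDir hD]
    ring
  rw [hlin, sub_div, mul_div_cancel_right₀ _ (pow_ne_zero 2 ht0), sub_add_cancel]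
  exact div_nonneg (sub_nonneg.2 (hmin _ ht)) (sq_nonneg t)

lemma eventually_lt_of_le_inner_hessian (hg : ContDiff ℝ 2 g) (hD : ∇ g y₀ ≠ 0) (hs : 0 < s)
    (hκ : 0 ≤ κ) (hκs : κ * s < ‖∇ g y₀‖)
    (hH : ∀ v, ⟪gradDir g y₀, v⟫_ℝ = 0 → -κ * ‖v‖ ^ 2 ≤ ⟪fderiv ℝ (∇ g) y₀ v, v⟫_ℝ) :
    ∀ᶠ p : E × E in 𝓝 (y₀, y₀), p.2 ∈ tangentBall g p.1 s → p.2 ≠ p.1 → g p.1 < g p.2 := by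
  set H := fderiv ℝ (∇ g) y₀
  set G := ‖∇ g y₀‖
  obtain ⟨ε, hε, hεG⟩ : ∃ ε > 0, 0 < G - ε - (κ * s + ε * ‖H‖ * (1 + 2 * s)) - ε * (2 * s) := by
    have hcont : Continuous fun ε => G - ε - (κ * s + ε * ‖H‖ * (1 + 2 * s)) - ε * (2 * s) := by
      fun_prop
    have hpos := (hcont.tendsto 0).eventually_const_lt (u := 0) (by simpa using hκs)
    exact ((eventually_mem_nhdsWithin (s := Ioi 0)).and
      (hpos.filter_mono nhdsWithin_le_nhds)).exists
  have hgrad : ContinuousAt (∇ g) y₀ := (contDiff_gradient hg).continuous.continuousAt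
  have hnear : ∀ᶠ y in 𝓝 y₀, ∇ g y ≠ 0 ∧ G - ε < ‖∇ g y‖ ∧ ‖gradDir g y₀ - gradDir g y‖ < ε :=
    (hgrad.eventually_ne hD).and ((hgrad.norm.eventually_const_lt (by linarith)).and
      (((continuousAt_gradDir hgrad hD).const_sub _).norm.eventually_lt_const (by simpa)))
  have hclose : ∀ᶠ p : E × E in 𝓝 (y₀, y₀), ‖p.2 - p.1‖ < ε := by
    have hcont : Continuous fun p : E × E => ‖p.2 - p.1‖ := by fun_prop
    exact hcont.continuousAt.eventually_lt_const (by simpa)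
  filter_upwards [hnear.prod_inl_nhds y₀, hclose, (isLittleO_taylor_remainder hg y₀).def hε]
    with ⟨y, z⟩ ⟨hDy, hGy, hνy⟩ hyz htaylor hz hne
  dsimp only at *
  rw [Real.norm_eq_abs, Real.norm_of_nonneg (sq_nonneg _)] at htaylor
  have hτ := inner_gradDir_pos hDy hs hz hne
  have hball := (mem_tangentBall_iff hDy hs.le).1 hz
  have hquad := le_half_inner_map_self_of_norm_sq_le (norm_gradDir hD) hκ hH hνy.le hyz.le
    hτ.le hball
  have hlin : (G - ε) * ⟪gradDir g y, z - y⟫_ℝ ≤ ⟪∇ g y, z - y⟫_ℝ := by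
    rw [inner_gradient_eq]; gcongr
  have hrem : ε * ‖z - y‖ ^ 2 ≤ ε * (2 * s * ⟪gradDir g y, z - y⟫_ℝ) := by gcongr
  have hpos := mul_pos hεG hτ
  linarith [neg_le_of_abs_le htaylor]

end SecondOrder

/-! ### Termination times -/

section Stability

variable {E : Type*} [NormedAddCommGroup E] [InnerProductSpace ℝ E] [CompleteSpace E] {g : E → ℝ}
  {y y₀ z : E} {s s' : ℝ}

lemma IsTangentMin.eventually_lt (hg : ContDiff ℝ 2 g) (hD : ∇ g y₀ ≠ 0) (hs : 0 < s)
    (hss : s < s') (hmin : IsTangentMin g y₀ s') :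
    ∀ᶠ p : E × E in 𝓝 (y₀, y₀), p.2 ∈ tangentBall g p.1 s → p.2 ≠ p.1 → g p.1 < g p.2 := by
  have hs' : 0 < s' := hs.trans hss
  refine eventually_lt_of_le_inner_hessian hg hD hs (κ := ‖∇ g y₀‖ / s') (by positivity) ?_
    fun v hv => hmin.le_inner_hessian hg hD hs' hv
  rw [div_mul_eq_mul_div, div_lt_iff₀ hs']
  exact mul_lt_mul_of_pos_left hss (norm_pos_iff.2 hD)

lemma exists_isStrictTangentMin (hg : ContDiff ℝ 2 g) (hD : ∇ g y ≠ 0) :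
    ∃ s > 0, IsStrictTangentMin g y s := by
  set H := fderiv ℝ (∇ g) y
  obtain ⟨r, hr, hHr⟩ : ∃ r > 0, ‖H‖ * r < ‖∇ g y‖ := by
    have hlim : Tendsto (fun r => ‖H‖ * r) (𝓝[>] 0) (𝓝 (‖H‖ * 0)) :=
      ((continuous_const_mul ‖H‖).tendsto 0).mono_left nhdsWithin_le_nhds
    exact ((eventually_mem_nhdsWithin (s := Ioi 0)).and
      (hlim.eventually_lt_const (by simpa using hD))).exists
  have hnear := eventually_lt_of_le_inner_hessian hg hD hr (norm_nonneg H) hHr fun v _ => by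
    have := neg_le_of_abs_le (abs_real_inner_le_norm (H v) v)
    nlinarith [H.le_opNorm v, norm_nonneg v]
  obtain ⟨δ, hδ, hball⟩ := Metric.eventually_nhds_iff.1 hnear.curry_nhds.self_of_nhds
  refine ⟨min r (δ / 3), by positivity, fun z hz =>
    hball ?_ (tangentBall_mono (min_le_left _ _) hz)⟩
  linarith [dist_le_of_mem_tangentBall hz, min_le_right r (δ / 3)]

lemma eventually_notMem_tangentBall (hg : ContinuousAt (∇ g) y₀) (hD : ∇ g y₀ ≠ 0)
    (hz : z ∉ tangentBall g y₀ s) : ∀ᶠ p : E × E in 𝓝 (y₀, z), p.2 ∉ tangentBall g p.1 s := by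
  have hcenter : ContinuousAt (fun p : E × E => p.1 + s • gradDir g p.1) (y₀, z) :=
    continuousAt_fst.add ((continuousAt_gradDir hg hD).fst''.const_smul s)
  simp only [tangentBall, mem_closedBall, not_le] at hz ⊢
  exact (continuousAt_snd.dist hcenter).eventually_const_lt hz

lemma eventually_mem_tangentBall (hg : ContinuousAt (∇ g) y₀) (hD : ∇ g y₀ ≠ 0) (hs : 0 < s)
    (hss : s < s') (hz : z ∈ tangentBall g y₀ s) (hne : z ≠ y₀) :
    ∀ᶠ p : E × E in 𝓝 (y₀, z), p.2 ∈ tangentBall g p.1 s' := by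
  have hsub : ContinuousAt (fun p : E × E => p.2 - p.1) (y₀, z) := by fun_prop
  have hdir : ContinuousAt (fun p : E × E => gradDir g p.1) (y₀, z) :=
    (continuousAt_gradDir hg hD).fst''
  have hlt := (hsub.norm.pow 2).eventually_lt ((hdir.inner hsub).const_mul (2 * s'))
    (norm_sub_sq_lt_of_mem_tangentBall hD hs hss hz hne)
  filter_upwards [hlt, (hg.eventually_ne hD).prod_inl_nhds z] with p hp hDp
  exact (mem_tangentBall_iff hDp (hs.trans hss).le).2 hp.le

lemma eventually_not_isTangentMin (hg : ContDiff ℝ 2 g) (hD : ∇ g y₀ ≠ 0) (hs : 0 < s)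
    (hss : s < s') (h : ¬ IsTangentMin g y₀ s) : ∀ᶠ y in 𝓝 y₀, ¬ IsTangentMin g y s' := by
  simp only [IsTangentMin, not_forall, not_le] at h ⊢
  obtain ⟨z, hz, hlt⟩ := h
  have hgrad := (contDiff_gradient hg).continuous.continuousAt (x := y₀)
  have hmem := (eventually_mem_tangentBall hgrad hD hs hss hz (ne_of_apply_ne g hlt.ne)).curry_nhds
  filter_upwards [hmem, hg.continuous.continuousAt.eventually_const_lt hlt] with y hy hgy
  exact ⟨z, hy.self_of_nhds, hgy⟩

lemma eventually_not_isTangentMin_of_lt (hg : ContDiff ℝ 2 g) (hD : ∇ g y₀ ≠ 0) (hs : 0 < s)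
    (hss : s < s') (h : ¬ IsStrictTangentMin g y₀ s) :
    ∀ᶠ y in 𝓝[{y | g y₀ < g y}] y₀, ¬ IsTangentMin g y s' := by
  simp only [IsTangentMin, IsStrictTangentMin, not_forall, not_lt, not_le] at h ⊢
  obtain ⟨z, hz, hne, hle⟩ := h
  have hgrad := (contDiff_gradient hg).continuous.continuousAt (x := y₀)
  have hmem := (eventually_mem_tangentBall hgrad hD hs hss hz hne).curry_nhds
  filter_upwards [hmem.filter_mono nhdsWithin_le_nhds, self_mem_nhdsWithin] with y hy hgy
  exact ⟨z, hy.self_of_nhds, hle.trans_lt hgy⟩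

end Stability

section ProperStability

variable {E : Type*} [NormedAddCommGroup E] [InnerProductSpace ℝ E] [ProperSpace E] {g : E → ℝ}
  {y₀ : E} {s s' : ℝ}

lemma eventually_nhdsWithin_isStrictTangentMin (hg : ContDiff ℝ 2 g) (hD : ∇ g y₀ ≠ 0)
    (hs : 0 < s) (hss : s < s') (hmin : IsTangentMin g y₀ s') {S : Set E}
    (hS : ∀ z ∈ tangentBall g y₀ s, z ≠ y₀ → ∀ᶠ p : E × E in 𝓝 (y₀, z), p.1 ∈ S → g p.1 < g p.2) :
    ∀ᶠ y in 𝓝[S] y₀, IsStrictTangentMin g y s := by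
  have hgrad := (contDiff_gradient hg).continuous.continuousAt (x := y₀)
  have hlocal : ∀ z ∈ closedBall y₀ (2 * s + 1), ∀ᶠ p : E × E in 𝓝 (y₀, z),
      p.1 ∈ S → p.2 ∈ tangentBall g p.1 s → p.2 ≠ p.1 → g p.1 < g p.2 := by
    intro z _
    rcases eq_or_ne z y₀ with rfl | hne
    · filter_upwards [hmin.eventually_lt hg hD hs hss] with p hp _ using hp
    by_cases hz : z ∈ tangentBall g y₀ s
    · filter_upwards [hS z hz hne] with p hp hpS _ _ using hp hpS
    · filter_upwards [eventually_notMem_tangentBall hgrad hD hz] with p hp _ hmem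
      exact absurd hmem hp
  rw [eventually_nhdsWithin_iff]
  filter_upwards [(isCompact_closedBall y₀ _).eventually_forall_of_forall_eventually
    (P := fun y z => y ∈ S → z ∈ tangentBall g y s → z ≠ y → g y < g z) hlocal,
    closedBall_mem_nhds y₀ one_pos] with y hy hyy₀ hyS z hz hne
  refine hy z (mem_closedBall.2 ?_) hyS hz hne
  linarith [dist_triangle z y y₀, dist_le_of_mem_tangentBall hz, mem_closedBall.1 hyy₀]

lemma IsStrictTangentMin.eventually (hg : ContDiff ℝ 2 g) (hD : ∇ g y₀ ≠ 0)
    (hs : 0 < s) (hss : s < s') (hmin : IsStrictTangentMin g y₀ s') :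
    ∀ᶠ y in 𝓝 y₀, IsStrictTangentMin g y s := by
  rw [← nhdsWithin_univ]
  refine eventually_nhdsWithin_isStrictTangentMin hg hD hs hss hmin.isTangentMin
    fun z hz hne => ?_
  have hlt : g y₀ < g z := hmin z (tangentBall_mono hss.le hz) hne
  filter_upwards [hg.continuous.continuousAt.fst''.eventually_lt
    (x₀ := (y₀, z)) hg.continuous.continuousAt.snd'' hlt] with p hp _ using hp

lemma IsTangentMin.eventually_isStrictTangentMin_of_lt (hg : ContDiff ℝ 2 g) (hD : ∇ g y₀ ≠ 0)
    (hs : 0 < s) (hss : s < s') (hmin : IsTangentMin g y₀ s') :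
    ∀ᶠ y in 𝓝[{y | g y < g y₀}] y₀, IsStrictTangentMin g y s := by
  refine eventually_nhdsWithin_isStrictTangentMin hg hD hs hss hmin fun z hz hne => ?_
  have hgrad := (contDiff_gradient hg).continuous.continuousAt (x := y₀)
  have hmem := (eventually_mem_tangentBall hgrad hD hs hss hz hne).curry_nhds.self_of_nhds
  filter_upwards [hmem.prod_inr_nhds y₀] with p hp hlt
  exact hlt.trans_le (hmin _ hp)

end ProperStability

section TerminationTimes

variable {E : Type*} [NormedAddCommGroup E] [InnerProductSpace ℝ E]

section Definitions

variable [CompleteSpace E]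

/-- The first termination time of the characteristic from `y`, as a real number. It is a junk value
when `y` is the unique minimizer on all of its tangent balls. -/
def firstTime (g : E → ℝ) (y : E) : ℝ := criticalRadius (IsStrictTangentMin g y)

/-- The second termination time of the characteristic from `y`, as a real number. It is a junk
value when `y` is a minimizer on all of its tangent balls. -/
def secondTime (g : E → ℝ) (y : E) : ℝ := criticalRadius (IsTangentMin g y)

/-- The set `M` of regular points whose first termination time is finite. -/
def firstTerminating (g : E → ℝ) : Set E := {y | ∇ g y ≠ 0 ∧ ∃ s, ¬ IsStrictTangentMin g y s}

/-- The set of regular points whose second termination time is finite. -/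
def secondTerminating (g : E → ℝ) : Set E := {y | ∇ g y ≠ 0 ∧ ∃ s, ¬ IsTangentMin g y s}

/-- The set `T(M)` in the coordinates `(y, t)`: the starting point `y ∈ M` of a characteristic and
a time between its two termination times. -/
def terminationPairs (g : E → ℝ) : Set (E × ℝ) :=
  {p | p.1 ∈ firstTerminating g ∧ firstTime g p.1 ≤ p.2 ∧ IsTangentMin g p.1 p.2}

variable {g : E → ℝ} {y y₀ : E} {s t a : ℝ}

lemma secondTerminating_subset_firstTerminating : secondTerminating g ⊆ firstTerminating g :=
  fun _ ⟨hD, s, hs⟩ => ⟨hD, s, mt IsStrictTangentMin.isTangentMin hs⟩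

lemma firstTime_pos (hg : ContDiff ℝ 2 g) (hy : y ∈ firstTerminating g) : 0 < firstTime g y := by
  obtain ⟨s, hs, hstrict⟩ := exists_isStrictTangentMin hg hy.1
  obtain ⟨T, hT⟩ := hy.2
  exact hs.trans_le (le_criticalRadius antitone_isStrictTangentMin hT hs hstrict)

lemma firstTime_le_secondTime (hy : y ∈ secondTerminating g) : firstTime g y ≤ secondTime g y :=
  criticalRadius_mono antitone_isTangentMin hy.2.choose_spec
    fun _ => IsStrictTangentMin.isTangentMin

lemma isTangentMin_firstTime (hg : ContDiff ℝ 2 g) (hy : y ∈ firstTerminating g) :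
    IsTangentMin g y (firstTime g y) :=
  isTangentMin_of_forall_lt hg.continuous (firstTime_pos hg hy) fun _ hr hlt =>
    (of_lt_criticalRadius antitone_isStrictTangentMin hr.le hlt).isTangentMin

lemma isTangentMin_secondTime (hg : ContDiff ℝ 2 g) (hy : y ∈ secondTerminating g) :
    IsTangentMin g y (secondTime g y) :=
  isTangentMin_of_forall_lt hg.continuous
    ((firstTime_pos hg (secondTerminating_subset_firstTerminating hy)).trans_le
      (firstTime_le_secondTime hy))
    fun _ hr hlt => of_lt_criticalRadius antitone_isTangentMin hr.le hlt

lemma mem_terminationPairs_firstTime (hg : ContDiff ℝ 2 g) (hy : y ∈ firstTerminating g) :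
    (y, firstTime g y) ∈ terminationPairs g :=
  ⟨hy, le_rfl, isTangentMin_firstTime hg hy⟩

lemma mem_terminationPairs_of_mem_Icc (hg : ContDiff ℝ 2 g) (hy : y ∈ secondTerminating g)
    (ht : t ∈ Icc (firstTime g y) (secondTime g y)) : (y, t) ∈ terminationPairs g :=
  ⟨secondTerminating_subset_firstTerminating hy, ht.1,
    antitone_isTangentMin ht.2 (isTangentMin_secondTime hg hy)⟩

lemma isOpen_secondTerminating (hg : ContDiff ℝ 2 g) : IsOpen (secondTerminating g) := by
  refine isOpen_iff_mem_nhds.2 fun y ⟨hD, s, hs⟩ => ?_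
  have hpos : ¬ IsTangentMin g y (max s 1) :=
    fun h => hs (antitone_isTangentMin (le_max_left _ _) h)
  filter_upwards [(contDiff_gradient hg).continuous.continuousAt.eventually_ne hD,
    eventually_not_isTangentMin hg hD (by positivity) (lt_add_one _) hpos] with z hDz hz
  exact ⟨hDz, _, hz⟩

lemma eventually_mem_secondTerminating_of_lt (hg : ContDiff ℝ 2 g) (hy : y₀ ∈ firstTerminating g) :
    ∀ᶠ y in 𝓝[{y | g y₀ < g y}] y₀, y ∈ secondTerminating g := by
  obtain ⟨hD, s, hs⟩ := hy
  have hpos : ¬ IsStrictTangentMin g y₀ (max s 1) :=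
    fun h => hs (antitone_isStrictTangentMin (le_max_left _ _) h)
  filter_upwards [((contDiff_gradient hg).continuous.continuousAt.eventually_ne hD).filter_mono
    nhdsWithin_le_nhds, eventually_not_isTangentMin_of_lt hg hD (by positivity) (lt_add_one _) hpos]
    with z hDz hz
  exact ⟨hDz, _, hz⟩

lemma eventually_secondTime_lt (hg : ContDiff ℝ 2 g) (hy : y₀ ∈ secondTerminating g)
    (ha : secondTime g y₀ < a) : ∀ᶠ y in 𝓝 y₀, secondTime g y < a := by
  obtain ⟨r, hr, hra⟩ := exists_between ha
  obtain ⟨r', hr', hra'⟩ := exists_between hra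
  have hr0 : 0 < r := criticalRadius_nonneg.trans_lt hr
  have hnot : ¬ IsTangentMin g y₀ r := fun h =>
    (le_criticalRadius antitone_isTangentMin hy.2.choose_spec hr0 h).not_gt hr
  filter_upwards [eventually_not_isTangentMin hg hy.1 hr0 hr' hnot] with y hynot
  refine lt_of_le_of_lt ?_ hra'
  exact le_of_not_gt fun h => hynot (of_lt_criticalRadius antitone_isTangentMin (by linarith) h)

lemma eventually_secondTime_lt_of_lt (hg : ContDiff ℝ 2 g) (hy : y₀ ∈ firstTerminating g)
    (ha : firstTime g y₀ < a) : ∀ᶠ y in 𝓝[{y | g y₀ < g y}] y₀, secondTime g y < a := by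
  obtain ⟨r, hr, hra⟩ := exists_between ha
  obtain ⟨r', hr', hra'⟩ := exists_between hra
  have hr0 : 0 < r := criticalRadius_nonneg.trans_lt hr
  have hnot : ¬ IsStrictTangentMin g y₀ r := fun h =>
    (le_criticalRadius antitone_isStrictTangentMin hy.2.choose_spec hr0 h).not_gt hr
  filter_upwards [eventually_not_isTangentMin_of_lt hg hy.1 hr0 hr' hnot] with y hynot
  refine lt_of_le_of_lt ?_ hra'
  exact le_of_not_gt fun h => hynot (of_lt_criticalRadius antitone_isTangentMin (by linarith) h)

end Definitions

variable [ProperSpace E] {g : E → ℝ} {y y₀ : E} {a : ℝ}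

lemma eventually_lt_firstTime_of_gt (hg : ContDiff ℝ 2 g) (hy : y₀ ∈ secondTerminating g)
    (ha : a < secondTime g y₀) : ∀ᶠ y in 𝓝[{y | g y < g y₀}] y₀, a < firstTime g y := by
  have hpos : 0 < secondTime g y₀ :=
    (firstTime_pos hg (secondTerminating_subset_firstTerminating hy)).trans_le
      (firstTime_le_secondTime hy)
  obtain ⟨r, har, hr⟩ := exists_between (max_lt ha hpos)
  obtain ⟨r', hrr', hr'⟩ := exists_between hr
  have hr0 : 0 < r := (le_max_right _ _).trans_lt har
  have hmin := of_lt_criticalRadius antitone_isTangentMin (by linarith) hr'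
  filter_upwards [hmin.eventually_isStrictTangentMin_of_lt hg hy.1 hr0 hrr',
    ((isOpen_secondTerminating hg).eventually_mem hy).filter_mono nhdsWithin_le_nhds]
    with y hstrict hyE
  obtain ⟨-, T, hT⟩ := secondTerminating_subset_firstTerminating hyE
  exact ((le_max_left _ _).trans_lt har).trans_le
    (le_criticalRadius antitone_isStrictTangentMin hT hr0 hstrict)

lemma eventually_lt_firstTime_of_lt (hg : ContDiff ℝ 2 g) (hy : y₀ ∈ firstTerminating g)
    (ha : a < firstTime g y₀) : ∀ᶠ y in 𝓝[{y | g y₀ < g y}] y₀, a < firstTime g y := by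
  obtain ⟨r, har, hr⟩ := exists_between (max_lt ha (firstTime_pos hg hy))
  obtain ⟨r', hrr', hr'⟩ := exists_between hr
  have hr0 : 0 < r := (le_max_right _ _).trans_lt har
  have hstrict := of_lt_criticalRadius antitone_isStrictTangentMin (by linarith) hr'
  filter_upwards [(hstrict.eventually hg hy.1 hr0 hrr').filter_mono nhdsWithin_le_nhds,
    eventually_mem_secondTerminating_of_lt hg hy] with y hy' hyE
  obtain ⟨-, T, hT⟩ := secondTerminating_subset_firstTerminating hyE
  exact ((le_max_left _ _).trans_lt har).trans_le
    (le_criticalRadius antitone_isStrictTangentMin hT hr0 hy')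

lemma tendsto_firstTime_nhdsWithin_lt (hg : ContDiff ℝ 2 g) (hy : y₀ ∈ secondTerminating g) :
    Tendsto (firstTime g) (𝓝[{y | g y < g y₀}] y₀) (𝓝 (secondTime g y₀)) := by
  refine tendsto_order.2 ⟨fun a ha => eventually_lt_firstTime_of_gt hg hy ha, fun a ha => ?_⟩
  filter_upwards [(eventually_secondTime_lt hg hy ha).filter_mono nhdsWithin_le_nhds,
    ((isOpen_secondTerminating hg).eventually_mem hy).filter_mono nhdsWithin_le_nhds] with y hlt hyE
  exact (firstTime_le_secondTime hyE).trans_lt hlt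

lemma tendsto_secondTime_nhdsWithin_lt (hg : ContDiff ℝ 2 g) (hy : y₀ ∈ secondTerminating g) :
    Tendsto (secondTime g) (𝓝[{y | g y < g y₀}] y₀) (𝓝 (secondTime g y₀)) := by
  refine tendsto_order.2 ⟨fun a ha => ?_, fun a ha =>
    (eventually_secondTime_lt hg hy ha).filter_mono nhdsWithin_le_nhds⟩
  filter_upwards [eventually_lt_firstTime_of_gt hg hy ha,
    ((isOpen_secondTerminating hg).eventually_mem hy).filter_mono nhdsWithin_le_nhds] with y hlt hyE
  exact hlt.trans_le (firstTime_le_secondTime hyE)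

lemma tendsto_firstTime_nhdsWithin_gt (hg : ContDiff ℝ 2 g) (hy : y₀ ∈ firstTerminating g) :
    Tendsto (firstTime g) (𝓝[{y | g y₀ < g y}] y₀) (𝓝 (firstTime g y₀)) := by
  refine tendsto_order.2 ⟨fun a ha => eventually_lt_firstTime_of_lt hg hy ha, fun a ha => ?_⟩
  filter_upwards [eventually_secondTime_lt_of_lt hg hy ha,
    eventually_mem_secondTerminating_of_lt hg hy] with y hlt hyE
  exact (firstTime_le_secondTime hyE).trans_lt hlt

lemma tendsto_secondTime_nhdsWithin_gt (hg : ContDiff ℝ 2 g) (hy : y₀ ∈ firstTerminating g) :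
    Tendsto (secondTime g) (𝓝[{y | g y₀ < g y}] y₀) (𝓝 (firstTime g y₀)) := by
  refine tendsto_order.2 ⟨fun a ha => ?_, fun a ha => eventually_secondTime_lt_of_lt hg hy ha⟩
  filter_upwards [eventually_lt_firstTime_of_lt hg hy ha,
    eventually_mem_secondTerminating_of_lt hg hy] with y hlt hyE
  exact hlt.trans_le (firstTime_le_secondTime hyE)

end TerminationTimes

/-! ### Traversing a region with countably many vertical segments -/

section Staircase

variable {X : Type*} [TopologicalSpace X]

section LinearOrder

variable [LinearOrder X] {a b : X → ℝ}

lemma countable_setOf_lt_of_tendsto_nhdsGT [OrderTopology X] [SecondCountableTopology X]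
    (hb : ∀ r, Tendsto b (𝓝[>] r) (𝓝 (a r))) : {r | a r < b r}.Countable := by
  let between : ℚ → Set X := fun q => {r | a r < q ∧ (q : ℝ) < b r}
  have hisolated (q : ℚ) (r : X) (hr : r ∈ between q) : 𝓝[between q ∩ Ioi r] r = ⊥ := by
    rw [← empty_mem_iff_bot, inter_comm, nhdsWithin_inter']
    filter_upwards [mem_inf_of_left ((hb r).eventually_lt_const hr.1),
      mem_inf_of_right (mem_principal_self _)] with r' hlt hr'
    exact hlt.not_gt hr'.2
  have hcount (q : ℚ) : (between q).Countable :=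
    Countable.mono (fun r hr => And.intro hr (hisolated q r hr))
      (countable_setOfPred_isolated_right_within (s := between q))
  refine (countable_iUnion hcount).mono fun r hr => ?_
  obtain ⟨q, hq⟩ := exists_rat_btwn (show a r < b r from hr)
  exact mem_iUnion.2 ⟨q, hq⟩

-- Where `ψ` can drop (rise) immediately next to `s`, the value of `F (ψ s)` at `s` must be the left
-- (right) limit of `a` and `b` at `ψ s`; elsewhere `F (ψ s)` is constant in its first argument.
lemma continuous_of_mem_Icc_of_tendsto {ψ : ℝ → X} (hψ : Continuous ψ) {F : X → ℝ → ℝ}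
    (hF : ∀ r, Continuous (F r)) (hmem : ∀ r s, F r s ∈ Icc (a r) (b r))
    (hleft : ∀ s, F (ψ s) s = b (ψ s) ∨ ∀ᶠ s' in 𝓝 s, ψ s ≤ ψ s')
    (hright : ∀ s, F (ψ s) s = a (ψ s) ∨ ∀ᶠ s' in 𝓝 s, ψ s' ≤ ψ s)
    (ha_left : ∀ r, Tendsto a (𝓝[<] r) (𝓝 (b r))) (hb_left : ∀ r, Tendsto b (𝓝[<] r) (𝓝 (b r)))
    (ha_right : ∀ r, Tendsto a (𝓝[>] r) (𝓝 (a r)))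
    (hb_right : ∀ r, Tendsto b (𝓝[>] r) (𝓝 (a r))) :
    Continuous fun s => F (ψ s) s := by
  refine continuous_iff_continuousAt.2 fun s => ?_
  have hcover : 𝓝 s = 𝓝[{s' | ψ s' < ψ s}] s ⊔ 𝓝[{s' | ψ s' = ψ s}] s
      ⊔ 𝓝[{s' | ψ s < ψ s'}] s := by
    rw [← nhdsWithin_union, ← nhdsWithin_union, eq_comm, nhdsWithin_eq_nhds]
    exact univ_mem' fun s' => or_assoc.2 (lt_trichotomy (ψ s') (ψ s))
  have hψ_within (S : Set X) : Tendsto ψ (𝓝[ψ ⁻¹' S] s) (𝓝[S] (ψ s)) :=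
    hψ.continuousWithinAt.tendsto_nhdsWithin (mapsTo_preimage ψ S)
  have htendsto_left : Tendsto (fun s => F (ψ s) s) (𝓝[ψ ⁻¹' Iio (ψ s)] s) (𝓝 (F (ψ s) s)) := by
    rcases hleft s with hval | hev
    · rw [hval]
      exact tendsto_of_tendsto_of_tendsto_of_le_of_le ((ha_left _).comp (hψ_within _))
        ((hb_left _).comp (hψ_within _)) (fun s => (hmem _ s).1) fun s => (hmem _ s).2
    · have hbot : 𝓝[ψ ⁻¹' Iio (ψ s)] s = ⊥ :=
        inf_principal_eq_bot.2 (hev.mono fun _ h => notMem_Iio.2 h)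
      exact hbot ▸ tendsto_bot
  have htendsto_right : Tendsto (fun s => F (ψ s) s) (𝓝[ψ ⁻¹' Ioi (ψ s)] s) (𝓝 (F (ψ s) s)) := by
    rcases hright s with hval | hev
    · rw [hval]
      exact tendsto_of_tendsto_of_tendsto_of_le_of_le ((ha_right _).comp (hψ_within _))
        ((hb_right _).comp (hψ_within _)) (fun s => (hmem _ s).1) fun s => (hmem _ s).2
    · have hbot : 𝓝[ψ ⁻¹' Ioi (ψ s)] s = ⊥ :=
        inf_principal_eq_bot.2 (hev.mono fun _ h => notMem_Ioi.2 h)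
      exact hbot ▸ tendsto_bot
  have htendsto_fibre : Tendsto (fun s => F (ψ s) s) (𝓝[{s' | ψ s' = ψ s}] s) (𝓝 (F (ψ s) s)) :=
    ((hF (ψ s)).continuousWithinAt.tendsto).congr' <| by
      filter_upwards [self_mem_nhdsWithin] with s' (hs' : ψ s' = ψ s)
      rw [hs']
  rw [ContinuousAt, hcover]
  exact (htendsto_left.sup htendsto_fibre).sup htendsto_right

lemma exists_strictMono_add_le [OrderTopology X] [DenselyOrdered X]
    [TopologicalSpace.SeparableSpace X] {J : Set X} (hJ : J.Countable) :
    ∃ l w : X → ℝ, StrictMono l ∧ (∀ r, 0 ≤ w r) ∧ (∀ r ∈ J, 0 < w r) ∧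
      ∀ r r', r < r' → l r + w r ≤ l r' := by
  obtain ⟨D, hDcount, hDdense⟩ := TopologicalSpace.exists_countable_dense X
  obtain ⟨ε, hε, c, hsum, -⟩ := (hJ.union hDcount).exists_pos_hasSum_le one_pos
  let w : X → ℝ := (J ∪ D).indicator ε
  have hw0 (r : X) : 0 ≤ w r := indicator_nonneg (fun r _ => (hε r).le) r
  have hwpos (r : X) (hr : r ∈ J ∪ D) : 0 < w r := by simpa only [w, indicator_of_mem hr] using hε r
  have hw : Summable w := summable_subtype_iff_indicator.1 hsum.summable
  let l : X → ℝ := fun r => ∑' j, (Iio r).indicator w j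
  have hstep (r r' : X) (h : r < r') : l r + w r ≤ l r' := by
    calc l r + w r = ∑' j, ((Iio r).indicator w j + ({r} : Set X).indicator w j) := by
          rw [(hw.indicator _).tsum_add (hw.indicator _), ← tsum_subtype {r}, tsum_singleton r w]
      _ = ∑' j, (Iic r).indicator w j := by
          simp_rw [← Iio_union_right, indicator_union_of_disjoint
            (disjoint_singleton_right.2 self_notMem_Iio)]
      _ ≤ l r' := (hw.indicator _).tsum_le_tsum
          (indicator_le_indicator_of_subset (Iic_subset_Iio.2 h) hw0) (hw.indicator _)
  refine ⟨l, w, fun r r' hrr' => ?_, hw0, fun r hr => hwpos r (Or.inl hr), hstep⟩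
  obtain ⟨d, hdD, hrd, hdr'⟩ := hDdense.exists_between hrr'
  linarith [hstep r d hrd, hstep d r' hdr', hw0 r, hwpos d (Or.inr hdD)]

end LinearOrder

lemma continuous_sSup_setOf_le [CompleteLinearOrder X] [OrderTopology X] [DenselyOrdered X]
    {l : X → ℝ} (hl : StrictMono l) : Continuous fun s => sSup {r | l r ≤ s} := by
  refine Monotone.continuous_of_surjective
    (fun s s' hss' => sSup_le_sSup fun r hr => le_trans hr hss') fun r => ⟨l r, ?_⟩
  simp only [hl.le_iff_le]
  exact isLUB_Iic.sSup_eq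

lemma exists_continuous_mem_Icc_eq_eq {a b l w : ℝ} (hab : a ≤ b) (hw : a < b → 0 < w) :
    ∃ f : ℝ → ℝ, Continuous f ∧ (∀ s, f s ∈ Icc a b) ∧ (∀ s ≤ l, f s = b) ∧
      ∀ s, l + w ≤ s → f s = a := by
  rcases hab.eq_or_lt with rfl | hlt
  · exact ⟨fun _ => a, continuous_const, by simp⟩
  · have hslope : 0 < (b - a) / w := div_pos (sub_pos.2 hlt) (hw hlt)
    refine ⟨fun s => projIcc a b hab (b - (s - l) * ((b - a) / w)), by fun_prop,
      fun s => Subtype.coe_prop _, fun s hs => ?_, fun s hs => ?_⟩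
    · exact congrArg Subtype.val (projIcc_of_right_le hab (by nlinarith))
    · have hdrop : w * ((b - a) / w) ≤ (s - l) * ((b - a) / w) :=
        mul_le_mul_of_nonneg_right (by linarith) hslope.le
      rw [mul_div_cancel₀ _ (hw hlt).ne'] at hdrop
      exact congrArg Subtype.val (projIcc_of_le_left hab (by linarith))

-- The path follows `a` and `b` from left to right and descends linearly from `b r` to `a r` at each
-- jump `r`. The jumps are countably many, so that disjoint time intervals `[l r, l r + w r]` with
-- finite total length are available for them.
lemma joinedIn_setOf_mem_Icc_of_tendsto [CompleteLinearOrder X] [OrderTopology X]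
    [DenselyOrdered X] [SecondCountableTopology X] {a b : X → ℝ} (hab : ∀ r, a r ≤ b r)
    (ha_left : ∀ r, Tendsto a (𝓝[<] r) (𝓝 (b r))) (hb_left : ∀ r, Tendsto b (𝓝[<] r) (𝓝 (b r)))
    (ha_right : ∀ r, Tendsto a (𝓝[>] r) (𝓝 (a r)))
    (hb_right : ∀ r, Tendsto b (𝓝[>] r) (𝓝 (a r))) :
    JoinedIn {p : X × ℝ | p.2 ∈ Icc (a p.1) (b p.1)} (⊥, b ⊥) (⊤, a ⊤) := by
  obtain ⟨l, w, hl, hw, hwpos, hstep⟩ :=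
    exists_strictMono_add_le (countable_setOf_lt_of_tendsto_nhdsGT hb_right)
  let ψ : ℝ → X := fun s => sSup {r | l r ≤ s}
  choose F hF hmem hF_left hF_right using fun r =>
    exists_continuous_mem_Icc_eq_eq (l := l r) (hab r) (hwpos r)
  have hψ_ge (r : X) (s : ℝ) (hs : l r ≤ s) : r ≤ ψ s := le_sSup hs
  have hψ_le (r : X) (s : ℝ) (hs : s < l r + w r) : ψ s ≤ r :=
    sSup_le fun r' hr' => le_of_not_gt fun h => (hs.trans_le (hstep r r' h)).not_ge hr'
  have hcont : Continuous fun s => (ψ s, F (ψ s) s) := by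
    have hψ : Continuous ψ := continuous_sSup_setOf_le hl
    refine hψ.prodMk (continuous_of_mem_Icc_of_tendsto hψ hF hmem
      (fun s => ?_) (fun s => ?_) ha_left hb_left ha_right hb_right)
    · refine (le_or_gt s (l (ψ s))).imp (hF_left _ s) fun h => ?_
      filter_upwards [lt_mem_nhds h] with s' hs' using hψ_ge _ _ hs'.le
    · refine (le_or_gt (l (ψ s) + w (ψ s)) s).imp (hF_right _ s) fun h => ?_
      filter_upwards [gt_mem_nhds h] with s' hs' using hψ_le _ _ hs'
  have hrange : range (fun s => (ψ s, F (ψ s) s)) ⊆ {p : X × ℝ | p.2 ∈ Icc (a p.1) (b p.1)} :=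
    range_subset_iff.2 fun s => hmem _ s
  refine ((isPathConnected_range hcont).joinedIn _ ⟨l ⊥, ?_⟩ _ ⟨l ⊤ + w ⊤, ?_⟩).mono hrange
  · have hψ_bot : ψ (l ⊥) = ⊥ := le_bot_iff.1 (sSup_le fun r hr => hl.le_iff_le.1 hr)
    simp only [hψ_bot, hF_left ⊥ _ le_rfl]
  · have hψ_top : ψ (l ⊤ + w ⊤) = ⊤ := top_le_iff.1 (hψ_ge _ _ (le_add_of_nonneg_right (hw ⊤)))
    simp only [hψ_top, hF_right ⊤ _ le_rfl]

lemma joinedIn_insert_setOf_mem_Icc_of_tendsto [CompleteLinearOrder X] [OrderTopology X]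
    [DenselyOrdered X] [SecondCountableTopology X] {a b : X → ℝ} (hab : ∀ r, ⊥ < r → a r ≤ b r)
    (ha_left : ∀ r, ⊥ < r → Tendsto a (𝓝[<] r) (𝓝 (b r)))
    (hb_left : ∀ r, ⊥ < r → Tendsto b (𝓝[<] r) (𝓝 (b r)))
    (ha_right : ∀ r, Tendsto a (𝓝[>] r) (𝓝 (a r)))
    (hb_right : ∀ r, Tendsto b (𝓝[>] r) (𝓝 (a r))) :
    JoinedIn (insert (⊥, a ⊥) {p : X × ℝ | ⊥ < p.1 ∧ p.2 ∈ Icc (a p.1) (b p.1)})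
      (⊥, a ⊥) (⊤, a ⊤) := by
  classical
  let b' : X → ℝ := Function.update b ⊥ (a ⊥)
  have hb'_bot : b' ⊥ = a ⊥ := Function.update_self _ _ _
  have hb' (r : X) (hr : ⊥ < r) : b' r = b r := Function.update_of_ne hr.ne' _ _
  have hb'_nhds (r : X) : b =ᶠ[𝓝[≠] r] b' := (Function.update_eventuallyEq_nhdsNE b ⊥ r _).symm
  have hsub : {p : X × ℝ | p.2 ∈ Icc (a p.1) (b' p.1)} ⊆
      insert (⊥, a ⊥) {p : X × ℝ | ⊥ < p.1 ∧ p.2 ∈ Icc (a p.1) (b p.1)} := by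
    rintro ⟨r, t⟩ ht
    rcases (bot_le (a := r)).eq_or_lt with rfl | hr
    · exact Or.inl (Prod.ext rfl (le_antisymm (ht.2.trans_eq hb'_bot) ht.1))
    · exact Or.inr ⟨hr, hb' r hr ▸ ht⟩
  refine .mono (hb'_bot ▸ joinedIn_setOf_mem_Icc_of_tendsto (fun r => ?_) (fun r => ?_)
    (fun r => ?_) ha_right fun r =>
      (hb_right r).congr' ((hb'_nhds r).filter_mono (nhdsGT_le_nhdsNE r))) hsub
  all_goals rcases (bot_le (a := r)).eq_or_lt with rfl | hr
  · exact hb'_bot.ge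
  · exact hb' r hr ▸ hab r hr
  · simp
  · exact hb' r hr ▸ ha_left r hr
  · simp
  · exact hb' r hr ▸ (hb_left r hr).congr' ((hb'_nhds r).filter_mono (nhdsLT_le_nhdsNE r))

end Staircase

/-! ### Path components of the set of termination pairs -/

section IncreasingCurves

variable {E : Type*} [NormedAddCommGroup E] [InnerProductSpace ℝ E] {g : E → ℝ} {y y₀ c : E}

lemma exists_eventually_strictMonoOn_lineMap [CompleteSpace E] (hg : Differentiable ℝ g)
    (hgrad : ContinuousAt (∇ g) y₀) (hD : ∇ g y₀ ≠ 0) {U : Set E} (hU : U ∈ 𝓝 y₀) :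
    ∃ c, ∀ᶠ y in 𝓝 y₀, segment ℝ y c ⊆ U ∧
      StrictMonoOn (fun r : ℝ => g (AffineMap.lineMap y c r)) (Icc 0 1) := by
  have hpos : ∀ᶠ p : E × E in 𝓝 (y₀, ∇ g y₀), 0 < ⟪∇ g p.1, p.2⟫_ℝ := by
    have hcont : ContinuousAt (fun p : E × E => ⟪∇ g p.1, p.2⟫_ℝ) (y₀, ∇ g y₀) :=
      ContinuousAt.inner (𝕜 := ℝ) hgrad.fst'' continuousAt_snd
    exact hcont.eventually_const_lt (real_inner_self_pos.2 hD)
  obtain ⟨V, hV, W, hW, hVW⟩ := mem_nhds_prod_iff.1 hpos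
  obtain ⟨ρ, hρ, hball⟩ := Metric.mem_nhds_iff.1 (inter_mem hU hV)
  obtain ⟨k, hkρ, hk⟩ : ∃ k : ℝ, y₀ + k • ∇ g y₀ ∈ ball y₀ ρ ∧ 0 < k := by
    have hlim : Tendsto (fun k : ℝ => y₀ + k • ∇ g y₀) (𝓝[>] 0) (𝓝 y₀) := by
      have hcont : Continuous fun k : ℝ => y₀ + k • ∇ g y₀ := by fun_prop
      simpa using (hcont.tendsto 0).mono_left nhdsWithin_le_nhds
    exact ((hlim.eventually (ball_mem_nhds y₀ hρ)).and self_mem_nhdsWithin).exists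
  have hdir : ∀ᶠ y in 𝓝 y₀, k⁻¹ • (y₀ + k • ∇ g y₀ - y) ∈ W := by
    have hcont : Continuous fun y => k⁻¹ • (y₀ + k • ∇ g y₀ - y) := by fun_prop
    refine hcont.continuousAt.eventually_mem ?_
    rwa [add_sub_cancel_left, inv_smul_smul₀ hk.ne']
  refine ⟨y₀ + k • ∇ g y₀, ?_⟩
  filter_upwards [ball_mem_nhds y₀ hρ, hdir] with y hy hyW
  have hseg := (convex_ball y₀ ρ).segment_subset hy hkρ
  refine ⟨hseg.trans (hball.trans inter_subset_left), strictMonoOn_of_deriv_pos (convex_Icc 0 1)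
    (fun r _ => (hasDerivAt_comp_lineMap hg _ _ r).continuousAt.continuousWithinAt) fun r hr => ?_⟩
  rw [(hasDerivAt_comp_lineMap hg _ _ r).deriv]
  have hz := hball (hseg (segment_eq_image_lineMap ℝ y _ ▸ mem_image_of_mem _ (interior_subset hr)))
  have hinner := hVW (mk_mem_prod hz.2 hyW)
  rw [mem_ofPred_eq, real_inner_smul_right] at hinner
  exact pos_of_mul_pos_right hinner (inv_pos.2 hk).le

lemma joinedIn_terminationPairs_firstTime [CompleteSpace E] {p : E × ℝ}
    (hp : p ∈ terminationPairs g) :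
    JoinedIn (terminationPairs g) p (p.1, firstTime g p.1) := by
  obtain ⟨y, t⟩ := p
  have hcont : Continuous fun s : ℝ => (y, s) := by fun_prop
  refine ((((convex_Icc (firstTime g y) t).isPathConnected (nonempty_Icc.2 hp.2.1)).image
    hcont).joinedIn _ (mem_image_of_mem _ (right_mem_Icc.2 hp.2.1)) _
    (mem_image_of_mem _ (left_mem_Icc.2 hp.2.1))).mono ?_
  rintro _ ⟨s, hs, rfl⟩
  exact ⟨hp.1, hs.1, antitone_isTangentMin hs.2 hp.2.2⟩

variable [ProperSpace E]

lemma joinedIn_terminationPairs_of_strictMono (hg : ContDiff ℝ 2 g) {γ : unitInterval → E}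
    (hγ : Continuous γ) (hmono : StrictMono (g ∘ γ)) (hfirst : γ 0 ∈ firstTerminating g)
    (hsecond : ∀ r, 0 < r → γ r ∈ secondTerminating g) :
    JoinedIn (terminationPairs g) (γ 0, firstTime g (γ 0)) (γ 1, firstTime g (γ 1)) := by
  have hfirst' (r : unitInterval) : γ r ∈ firstTerminating g := by
    rcases (unitInterval.nonneg' (t := r)).eq_or_lt with rfl | hr
    exacts [hfirst, secondTerminating_subset_firstTerminating (hsecond r hr)]
  have hγ_left (r : unitInterval) : Tendsto γ (𝓝[<] r) (𝓝[{y | g y < g (γ r)}] (γ r)) :=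
    hγ.continuousWithinAt.tendsto_nhdsWithin fun r' hr' => hmono hr'
  have hγ_right (r : unitInterval) : Tendsto γ (𝓝[>] r) (𝓝[{y | g (γ r) < g y}] (γ r)) :=
    hγ.continuousWithinAt.tendsto_nhdsWithin fun r' hr' => hmono hr'
  have hjoin := joinedIn_insert_setOf_mem_Icc_of_tendsto
    (a := fun r => firstTime g (γ r)) (b := fun r => secondTime g (γ r))
    (fun r hr => firstTime_le_secondTime (hsecond r hr))
    (fun r hr => (tendsto_firstTime_nhdsWithin_lt hg (hsecond r hr)).comp (hγ_left r))
    (fun r hr => (tendsto_secondTime_nhdsWithin_lt hg (hsecond r hr)).comp (hγ_left r))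
    (fun r => (tendsto_firstTime_nhdsWithin_gt hg (hfirst' r)).comp (hγ_right r))
    (fun r => (tendsto_secondTime_nhdsWithin_gt hg (hfirst' r)).comp (hγ_right r))
  refine (hjoin.map (hγ.prodMap continuous_id)).mono ?_
  rintro _ ⟨⟨r, t⟩, hrt | ⟨hr, ht⟩, rfl⟩
  · obtain ⟨rfl, rfl⟩ := Prod.mk_inj.1 hrt
    exact mem_terminationPairs_firstTime hg hfirst
  · exact mem_terminationPairs_of_mem_Icc hg (hsecond r hr) ht

lemma joinedIn_terminationPairs_of_lineMap (hg : ContDiff ℝ 2 g)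
    (hmono : StrictMonoOn (fun r : ℝ => g (AffineMap.lineMap y c r)) (Icc 0 1))
    (hfirst : y ∈ firstTerminating g)
    (hsecond : ∀ r ∈ Ioc (0 : ℝ) 1, AffineMap.lineMap y c r ∈ secondTerminating g) :
    JoinedIn (terminationPairs g) (y, firstTime g y) (c, firstTime g c) := by
  have hcont : Continuous fun r : unitInterval => AffineMap.lineMap y c (r : ℝ) := by fun_prop
  simpa using joinedIn_terminationPairs_of_strictMono hg hcont
    (fun r r' hrr' => hmono r.2 r'.2 hrr') (by simpa using hfirst)
    fun r hr => hsecond r ⟨hr, r.2.2⟩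

lemma exists_eventually_joinedIn_terminationPairs (hg : ContDiff ℝ 2 g)
    (hy₀ : y₀ ∈ secondTerminating g) :
    ∃ c, ∀ᶠ y in 𝓝 y₀, JoinedIn (terminationPairs g) (y, firstTime g y) (c, firstTime g c) := by
  obtain ⟨c, hc⟩ := exists_eventually_strictMonoOn_lineMap (hg.differentiable (by norm_num))
    (contDiff_gradient hg).continuous.continuousAt hy₀.1
    ((isOpen_secondTerminating hg).mem_nhds hy₀)
  refine ⟨c, hc.mono fun y ⟨hseg, hmono⟩ => ?_⟩
  rw [segment_eq_image_lineMap, image_subset_iff] at hseg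
  have hy : y ∈ secondTerminating g := by simpa using hseg (left_mem_Icc.2 zero_le_one)
  exact joinedIn_terminationPairs_of_lineMap hg hmono
    (secondTerminating_subset_firstTerminating hy) fun r hr => hseg (Ioc_subset_Icc_self hr)

lemma exists_secondTerminating_joinedIn_terminationPairs (hg : ContDiff ℝ 2 g)
    (hy₀ : y₀ ∈ firstTerminating g) :
    ∃ c ∈ secondTerminating g,
      JoinedIn (terminationPairs g) (y₀, firstTime g y₀) (c, firstTime g c) := by
  obtain ⟨c, hc⟩ := exists_eventually_strictMonoOn_lineMap (hg.differentiable (by norm_num))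
    (contDiff_gradient hg).continuous.continuousAt hy₀.1
    (eventually_nhdsWithin_iff.1 (eventually_mem_secondTerminating_of_lt hg hy₀))
  obtain ⟨hseg, hmono⟩ := hc.self_of_nhds
  rw [segment_eq_image_lineMap, image_subset_iff] at hseg
  have hsecond (r : ℝ) (hr : r ∈ Ioc (0 : ℝ) 1) :
      AffineMap.lineMap y₀ c r ∈ secondTerminating g := by
    have hlt := hmono (left_mem_Icc.2 zero_le_one) (Ioc_subset_Icc_self hr) hr.1
    exact hseg (Ioc_subset_Icc_self hr) (by simpa using hlt)
  have hc : c ∈ secondTerminating g := by simpa using hsecond 1 (right_mem_Ioc.2 one_pos)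
  exact ⟨c, hc, joinedIn_terminationPairs_of_lineMap hg hmono hy₀ hsecond⟩

lemma exists_countable_joinedIn_terminationPairs (hg : ContDiff ℝ 2 g) :
    ∃ D : Set (E × ℝ), D.Countable ∧
      ∀ p ∈ terminationPairs g, ∃ q ∈ D, JoinedIn (terminationPairs g) p q := by
  choose! c hc using fun y (hy : y ∈ secondTerminating g) =>
    exists_eventually_joinedIn_terminationPairs hg hy
  obtain ⟨Y, -, hYcount, hYcover⟩ := TopologicalSpace.countable_cover_nhdsWithin
    fun y hy => mem_nhdsWithin_of_mem_nhds (hc y hy)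
  refine ⟨(fun y => (c y, firstTime g (c y))) '' Y, hYcount.image _, fun p hp => ?_⟩
  obtain ⟨y, hy, hpy⟩ := exists_secondTerminating_joinedIn_terminationPairs hg hp.1
  obtain ⟨y₀, hy₀, hyy₀⟩ := mem_iUnion₂.1 (hYcover hy)
  exact ⟨_, mem_image_of_mem _ hy₀,
    ((joinedIn_terminationPairs_firstTime hp).trans hpy).trans hyy₀⟩

end IncreasingCurves

section PathComponents

variable {X Y : Type*} [TopologicalSpace X] [TopologicalSpace Y]

lemma exists_countable_joinedIn_image {S : Set X} {f : X → Y} (hf : ContinuousOn f S)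
    (h : ∃ D : Set X, D.Countable ∧ ∀ p ∈ S, ∃ q ∈ D, JoinedIn S p q) :
    ∃ D : Set Y, D.Countable ∧ ∀ p ∈ f '' S, ∃ q ∈ D, JoinedIn (f '' S) p q := by
  obtain ⟨D, hD, hjoin⟩ := h
  refine ⟨f '' D, hD.image f, ?_⟩
  rintro _ ⟨p, hp, rfl⟩
  obtain ⟨q, hq, hpq⟩ := hjoin p hp
  exact ⟨f q, mem_image_of_mem f hq, hpq.map_continuousOn hf⟩

lemma exists_countable_family_pathComponentIn {S : Set X}
    (h : ∃ D : Set X, D.Countable ∧ ∀ p ∈ S, ∃ q ∈ D, JoinedIn S p q) :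
    ∃ 𝒮 : Set (Set X), 𝒮.Countable ∧ (∀ C ∈ 𝒮, C.Nonempty ∧ IsPathConnected C) ∧
      𝒮.PairwiseDisjoint id ∧ ⋃₀ 𝒮 = S ∧
      ∀ C ∈ 𝒮, ∀ D : Set X, C ⊆ D → D ⊆ S → IsPathConnected D → D = C := by
  obtain ⟨D, hD, hjoin⟩ := h
  refine ⟨pathComponentIn S '' (D ∩ S), (hD.mono inter_subset_left).image _, ?_, ?_, ?_, ?_⟩
  · rintro _ ⟨q, hq, rfl⟩
    exact ⟨⟨q, mem_pathComponentIn_self hq.2⟩, isPathConnected_pathComponentIn hq.2⟩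
  · rintro _ ⟨q, -, rfl⟩ _ ⟨q', -, rfl⟩ hne
    refine disjoint_left.2 fun p hp hp' => hne ?_
    exact (pathComponentIn_congr hp).symm.trans (pathComponentIn_congr hp')
  · refine subset_antisymm (sUnion_subset ?_) fun p hp => ?_
    · rintro _ ⟨q, -, rfl⟩
      exact pathComponentIn_subset
    · obtain ⟨q, hq, hpq⟩ := hjoin p hp
      exact ⟨_, mem_image_of_mem _ ⟨hq, hpq.target_mem⟩, hpq.symm⟩
  · rintro _ ⟨q, hq, rfl⟩ C hqC hCS hC
    exact (hC.subset_pathComponentIn (hqC (mem_pathComponentIn_self hq.2)) hCS).antisymm hqC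

end PathComponents

/-! ### The Hopf–Lax function -/

section Danskin

open Asymptotics

lemma hasFDerivAt_unique_of_le {F : Type*} [NormedAddCommGroup F] [NormedSpace ℝ F] {f h : F → ℝ}
    {f' h' : F →L[ℝ] ℝ} {a : F} (hf : HasFDerivAt f f' a) (hh : HasFDerivAt h h' a) (hle : f ≤ h)
    (heq : f a = h a) : f' = h' := by
  have hmin : IsLocalMin (h - f) a := Eventually.of_forall fun x => by
    simpa only [Pi.sub_apply, heq, sub_self] using sub_nonneg.2 (hle x)
  exact (sub_eq_zero.1 (hmin.hasFDerivAt_eq_zero (hh.sub hf))).symm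

variable {F V : Type*} [NormedAddCommGroup F] [NormedSpace ℝ F]

lemma hasFDerivAt_of_isLeast_image [TopologicalSpace V] {K : Set V} (hK : IsCompact K)
    {G : F → V → ℝ} {φ : F → ℝ} {q₀ : F} {Λ : F →L[ℝ] ℝ}
    (hφ : ∀ᶠ q in 𝓝 q₀, IsLeast (G q '' K) (φ q))
    (hcont : ∀ v ∈ K, ContinuousAt (Function.uncurry G) (q₀, v))
    (hderiv : ∀ v ∈ K, G q₀ v = φ q₀ →
      (fun p : F × V => G p.1 p.2 - G q₀ p.2 - Λ (p.1 - q₀)) =o[𝓝 (q₀, v)] fun p => p.1 - q₀) :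
    HasFDerivAt φ Λ q₀ := by
  obtain ⟨⟨v₀, hv₀, hv₀_min⟩, hφ₀⟩ := hφ.self_of_nhds
  rw [hasFDerivAt_iff_isLittleO, isLittleO_iff]
  intro ε hε
  have hupper : ∀ᶠ q in 𝓝 q₀, φ q ≤ φ q₀ + Λ (q - q₀) + ε * ‖q - q₀‖ := by
    have hv₀_nhds : Tendsto (fun q => (q, v₀)) (𝓝 q₀) (𝓝 (q₀, v₀)) :=
      (Continuous.prodMk_left v₀).continuousAt
    filter_upwards [hφ, hv₀_nhds.eventually ((hderiv v₀ hv₀ hv₀_min).def hε)] with q hq hv₀q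
    rw [hv₀_min, Real.norm_eq_abs] at hv₀q
    linarith [hq.2 (mem_image_of_mem _ hv₀), (abs_le.1 hv₀q).2]
  have hlower : ∀ᶠ q in 𝓝 q₀, ∀ v ∈ K, v ∈ K → φ q₀ + Λ (q - q₀) - ε * ‖q - q₀‖ ≤ G q v := by
    refine hK.eventually_forall_of_forall_eventually fun v hv => ?_
    rcases (hφ₀ (mem_image_of_mem _ hv)).eq_or_lt with hmin | hlt
    · filter_upwards [(hderiv v hv hmin.symm).def hε] with p hp hpK
      rw [Real.norm_eq_abs] at hp
      linarith [hφ₀ (mem_image_of_mem _ hpK), (abs_le.1 hp).1]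
    · have hbound :
          ContinuousAt (fun p : F × V => φ q₀ + Λ (p.1 - q₀) - ε * ‖p.1 - q₀‖) (q₀, v) := by
        fun_prop
      filter_upwards [hbound.eventually_lt (hcont v hv) (by simpa using hlt)] with p hp _
      exact hp.le
  filter_upwards [hφ, hupper, hlower] with q hq hle hge
  obtain ⟨v, hv, hv_min⟩ := hq.1
  rw [Real.norm_eq_abs, abs_le]
  constructor <;> linarith [hge v hv hv, hv_min]

variable [NormedAddCommGroup V] [NormedSpace ℝ V]

lemma isLittleO_sub_left_of_hasStrictFDerivAt {G : F × V → ℝ} {L : F × V →L[ℝ] ℝ} {q₀ : F} {v₀ : V}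
    (h : HasStrictFDerivAt G L (q₀, v₀)) :
    (fun p : F × V => G p - G (q₀, p.2) - L (p.1 - q₀, 0)) =o[𝓝 (q₀, v₀)] fun p => p.1 - q₀ := by
  have hpair : Tendsto (fun p : F × V => (p, (q₀, p.2))) (𝓝 (q₀, v₀)) (𝓝 ((q₀, v₀), (q₀, v₀))) :=
    Continuous.tendsto' (by fun_prop) _ _ rfl
  have hsub (p : F × V) : p - (q₀, p.2) = (p.1 - q₀, 0) := by ext <;> simp
  have hnorm (p : F × V) : ‖p - (q₀, p.2)‖ = ‖p.1 - q₀‖ := by rw [hsub, Prod.norm_mk]; simp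
  refine ((h.isLittleO.comp_tendsto hpair).congr_left fun p => ?_).trans_isBigO
    (IsBigO.of_bound 1 (Eventually.of_forall fun p => ?_))
  · simp only [Function.comp_apply, hsub]
  · simp only [Function.comp_apply, hnorm, one_mul, le_refl]

lemma hasStrictFDerivAt_add_smul (x v : V) (t : ℝ) :
    HasStrictFDerivAt (fun p : (V × ℝ) × V => p.1.1 + p.1.2 • p.2)
      ((ContinuousLinearMap.fst ℝ V ℝ).coprod (t • .id ℝ V) +
        ((ContinuousLinearMap.snd ℝ V ℝ).smulRight v).comp (.fst ℝ (V × ℝ) V)) ((x, t), v) := by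
  have hfst : HasStrictFDerivAt (fun p : (V × ℝ) × V => p.1.1) _ ((x, t), v) :=
    (hasStrictFDerivAt_fst (𝕜 := ℝ)).fst
  have hsnd : HasStrictFDerivAt (fun p : (V × ℝ) × V => p.1.2) _ ((x, t), v) :=
    (hasStrictFDerivAt_fst (𝕜 := ℝ)).snd
  refine (hfst.fun_add (hsnd.fun_smul hasStrictFDerivAt_snd)).congr_fderiv ?_
  ext <;> simp

lemma image_add_smul_closedBall {α : Type*} (f : V → α) (x : V) {t : ℝ} (ht : 0 ≤ t) :
    (fun v => f (x + t • v)) '' closedBall 0 1 = f '' closedBall x t := by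
  rw [← affinity_unitClosedBall ht, ← image_smul, ← image_vadd, image_image, image_image]
  rfl

end Danskin

section FirstOrder

variable {E : Type*} [NormedAddCommGroup E] [InnerProductSpace ℝ E] [CompleteSpace E]
  {g : E → ℝ} {x y : E} {t : ℝ}

lemma eq_add_smul_gradDir_of_isMinOn (hg : DifferentiableAt ℝ g y)
    (hD : ∇ g y ≠ 0) (hy : y ∈ closedBall x t) (hmin : IsMinOn g (closedBall x t) y) :
    x = y + t • gradDir g y := by
  have ht : 0 ≤ t := dist_nonneg.trans hy
  have hz : x - t • gradDir g y ∈ closedBall x t := by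
    rw [mem_closedBall, dist_self_sub_left, norm_smul, norm_gradDir hD, mul_one,
      Real.norm_of_nonneg ht]
  have hinner : 0 ≤ ⟪gradDir g y, x - t • gradDir g y - y⟫_ℝ := by
    refine nonneg_of_mul_nonneg_right ?_ (norm_pos_iff.2 hD)
    rw [← inner_gradient_eq, inner_gradient_left]
    exact hmin.localize.hasFDerivWithinAt_nonneg hg.hasFDerivAt.hasFDerivWithinAt
      (sub_mem_posTangentConeAt_of_segment_subset
        ((convex_closedBall x t).segment_subset hy hz))
  have hle : ‖x - y‖ ≤ t := by rwa [← dist_eq_norm']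
  rw [sub_right_comm, inner_sub_right, real_inner_smul_right, real_inner_self_eq_norm_sq,
    norm_gradDir hD] at hinner
  have hnorm : ‖x - y - t • gradDir g y‖ ^ 2 ≤ 0 := by
    rw [norm_sub_sq_real, real_inner_smul_right, real_inner_comm, norm_smul, norm_gradDir hD,
      Real.norm_of_nonneg ht]
    nlinarith [norm_nonneg (x - y)]
  have hzero : x - y - t • gradDir g y = 0 :=
    norm_eq_zero.1 (pow_eq_zero_iff two_ne_zero |>.1 (hnorm.antisymm (sq_nonneg _)))
  rw [← sub_eq_zero, ← hzero, sub_sub]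

end FirstOrder

section HopfLax

variable {n : ℕ} {g : Euc n → ℝ} {x y z : Euc n} {s t : ℝ}

lemma isLeast_HLu (hg : Continuous g) (ht : 0 ≤ t) : IsLeast (g '' closedBall x t) (HLu g x t) :=
  ((isCompact_closedBall x t).image hg).isLeast_sInf ((nonempty_closedBall.2 ht).image g)

lemma HLL_eq_sep_isMinOn (hg : Continuous g) :
    HLL g x t = {y ∈ closedBall x t | IsMinOn g (closedBall x t) y} := by
  ext y
  rw [HLL, mem_sep_iff, mem_closedBall, dist_eq_norm]
  refine and_congr_right fun hy => ?_
  have hleast := isLeast_HLu hg ((norm_nonneg _).trans hy) (x := x)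
  refine ⟨fun heq z hz => ?_, fun hmin => ?_⟩
  · exact heq.trans_le (hleast.2 (mem_image_of_mem g hz))
  · refine (IsLeast.unique ?_ hleast)
    exact ⟨mem_image_of_mem g (mem_closedBall_iff_norm.2 hy), forall_mem_image.2 hmin⟩

lemma HLL_nonempty (hg : Continuous g) (ht : 0 ≤ t) : (HLL g x t).Nonempty := by
  obtain ⟨y, hy, heq⟩ := (isLeast_HLu hg ht (x := x)).1
  exact ⟨y, mem_closedBall_iff_norm.1 hy, heq⟩

lemma eq_charX_of_mem_HLL (hg : Differentiable ℝ g) (hy : y ∈ HLL g x t) (hD : ∇ g y ≠ 0) :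
    x = charX (∇ g) y t := by
  rw [HLL_eq_sep_isMinOn hg.continuous] at hy
  exact eq_add_smul_gradDir_of_isMinOn (hg y) hD hy.1 hy.2

lemma mem_HLL_charX_iff (hg : Continuous g) (hs : 0 ≤ s) :
    y ∈ HLL g (charX (∇ g) y s) s ↔ IsTangentMin g y s := by
  rw [HLL_eq_sep_isMinOn hg]
  exact and_iff_right (self_mem_tangentBall hs)

lemma HLL_charX_eq_singleton_iff (hg : Continuous g) (hs : 0 ≤ s) :
    HLL g (charX (∇ g) y s) s = {y} ↔ IsStrictTangentMin g y s := by
  constructor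
  · intro h z hz hne
    have hmin : IsTangentMin g y s := (mem_HLL_charX_iff hg hs).1 (h ▸ mem_singleton y)
    refine (hmin z hz).lt_of_ne fun heq => hne ?_
    rw [← mem_singleton_iff, ← h, HLL_eq_sep_isMinOn hg]
    exact ⟨hz, fun w hw => heq ▸ hmin w hw⟩
  · intro h
    refine eq_singleton_iff_unique_mem.2
      ⟨(mem_HLL_charX_iff hg hs).2 h.isTangentMin, fun z hz => ?_⟩
    rw [HLL_eq_sep_isMinOn hg] at hz
    by_contra hne
    exact (h z hz.1 hne).not_ge (hz.2 (self_mem_tangentBall hs))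

lemma fderiv_eq_of_mem_HLL (hg : Differentiable ℝ g) {L : Euc n × ℝ →L[ℝ] ℝ}
    (hL : HasFDerivAt (fun q : Euc n × ℝ => HLu g q.1 q.2) L (x, t)) (hy : y ∈ HLL g x t) :
    fderiv ℝ g y = L.comp (ContinuousLinearMap.inl ℝ (Euc n) ℝ) := by
  have hspace : HasFDerivAt (fun x' => HLu g x' t) (L.comp (.inl ℝ (Euc n) ℝ)) x :=
    HasFDerivAt.comp (f := fun x' => (x', t)) (g := fun q : Euc n × ℝ => HLu g q.1 q.2) x hL
      (hasFDerivAt_prodMk_left x t)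
  have htranslate : HasFDerivAt (fun x' => g (x' + (y - x))) (fderiv ℝ g y) x :=
    (hasFDerivAt_comp_add_right _).2 (by simpa using (hg y).hasFDerivAt)
  refine (hasFDerivAt_unique_of_le hspace htranslate (fun x' => ?_) ?_).symm
  · refine (isLeast_HLu hg.continuous ((norm_nonneg _).trans hy.1)).2 (mem_image_of_mem g ?_)
    simpa [mem_closedBall_iff_norm] using hy.1
  · simpa using hy.2.symm

lemma inner_gradient_sub_of_mem_HLL (hg : Differentiable ℝ g) (hy : y ∈ HLL g x t) :
    ⟪∇ g y, y - x⟫_ℝ = -(t * ‖∇ g y‖) := by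
  by_cases hD : ∇ g y = 0
  · simp [hD]
  · have hx : y - x = -(t • gradDir g y) := by
      rw [eq_charX_of_mem_HLL hg hy hD]
      exact sub_add_cancel_left _ _
    rw [inner_gradient_eq, hx, inner_neg_right, real_inner_smul_right, real_inner_self_eq_norm_sq,
      norm_gradDir hD]
    ring

lemma isLittleO_add_smul_of_mem_HLL (hg : ContDiff ℝ 1 g) (ht : 0 < t) {v : Euc n}
    (hv : x + t • v ∈ HLL g x t) :
    (fun p : (Euc n × ℝ) × Euc n => g (p.1.1 + p.1.2 • p.2) - g (x + t • p.2) -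
      ((innerSL ℝ (∇ g (x + t • v))).coprod (-‖∇ g (x + t • v)‖ • .id ℝ ℝ)) (p.1 - (x, t)))
      =o[𝓝 ((x, t), v)] fun p => p.1 - (x, t) := by
  have hinner : ⟪∇ g (x + t • v), v⟫_ℝ = -‖∇ g (x + t • v)‖ := by
    have h := inner_gradient_sub_of_mem_HLL (hg.differentiable one_ne_zero) hv
    rw [add_sub_cancel_left, real_inner_smul_right, ← mul_neg] at h
    exact mul_left_cancel₀ ht.ne' h
  have hstrict : HasStrictFDerivAt (fun p : (Euc n × ℝ) × Euc n => g (p.1.1 + p.1.2 • p.2)) _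
      ((x, t), v) :=
    (hg.contDiffAt.hasStrictFDerivAt one_ne_zero).comp _ (hasStrictFDerivAt_add_smul x v t)
  refine (isLittleO_sub_left_of_hasStrictFDerivAt hstrict).congr_left fun p => ?_
  simp [← inner_gradient_left, hinner, mul_comm]

lemma differentiableAt_HLu (hg : ContDiff ℝ 1 g) (ht : 0 < t) {p : Euc n}
    (hp : ∀ y ∈ HLL g x t, ∇ g y = p) :
    DifferentiableAt ℝ (fun q : Euc n × ℝ => HLu g q.1 q.2) (x, t) := by
  have hleast : ∀ᶠ q : Euc n × ℝ in 𝓝 (x, t),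
      IsLeast ((fun v => g (q.1 + q.2 • v)) '' closedBall 0 1) (HLu g q.1 q.2) := by
    filter_upwards [(isOpen_lt continuous_const continuous_snd).mem_nhds ht] with q hq
    have hq : 0 < q.2 := hq
    rw [image_add_smul_closedBall g q.1 hq.le]
    exact isLeast_HLu hg.continuous hq.le
  have hcont : Continuous fun p : (Euc n × ℝ) × Euc n => g (p.1.1 + p.1.2 • p.2) :=
    hg.continuous.comp (by fun_prop)
  refine (hasFDerivAt_of_isLeast_image (Λ := (innerSL ℝ p).coprod (-‖p‖ • .id ℝ ℝ))
    (isCompact_closedBall (0 : Euc n) 1) hleast (fun v _ => hcont.continuousAt)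
    fun v hv hmin => ?_).differentiableAt
  have hmem : x + t • v ∈ HLL g x t := by
    refine ⟨?_, hmin⟩
    rw [add_sub_cancel_left, norm_smul, Real.norm_of_nonneg ht.le]
    exact mul_le_of_le_one_right ht.le (mem_closedBall_zero_iff.1 hv)
  simpa only [hp _ hmem] using isLittleO_add_smul_of_mem_HLL hg ht hmem

lemma exists_gradient_ne_of_mem_SigmaSet (hg : ContDiff ℝ 1 g) (h : (x, t) ∈ SigmaSet g) :
    ∃ y ∈ HLL g x t, ∃ z ∈ HLL g x t, ∇ g y ≠ ∇ g z := by
  obtain ⟨ht, hnd⟩ := h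
  obtain ⟨z, hz⟩ := HLL_nonempty hg.continuous ht.le (x := x)
  by_contra! hall
  exact hnd (differentiableAt_HLu hg ht fun y hy => hall y hy z hz)

lemma gradient_eq_of_differentiableAt_HLu (hg : Differentiable ℝ g)
    (h : DifferentiableAt ℝ (fun q : Euc n × ℝ => HLu g q.1 q.2) (x, t)) (hy : y ∈ HLL g x t)
    (hz : z ∈ HLL g x t) : ∇ g y = ∇ g z := by
  rw [gradient, gradient, fderiv_eq_of_mem_HLL hg h.hasFDerivAt hy,
    fderiv_eq_of_mem_HLL hg h.hasFDerivAt hz]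

lemma tbar_le_ofReal_iff (hg : Continuous g) (ht : 0 ≤ t) :
    tbar g (∇ g) y ≤ ENNReal.ofReal t ↔ ∀ s, t < s → ¬ IsStrictTangentMin g y s := by
  rw [tbar, sSup_le_iff, forall_mem_image]
  refine ⟨fun h s hts hs => ?_, fun h s ⟨hs, heq⟩ => ENNReal.ofReal_le_ofReal ?_⟩
  · have hs0 : 0 < s := ht.trans_lt hts
    exact hts.not_ge ((ENNReal.ofReal_le_ofReal_iff ht).1
      (h ⟨hs0, (HLL_charX_eq_singleton_iff hg hs0.le).2 hs⟩))
  · exact le_of_not_gt fun hts => h s hts ((HLL_charX_eq_singleton_iff hg hs.le).1 heq)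

lemma ofReal_le_tsnd_iff (hg : Continuous g) (ht : 0 < t) :
    ENNReal.ofReal t ≤ tsnd g (∇ g) y ↔ IsTangentMin g y t := by
  rw [tsnd, le_sInf_iff, forall_mem_image]
  refine ⟨fun h => isTangentMin_of_forall_lt hg ht fun r hr hrt => ?_,
    fun h s ⟨hs, hnot⟩ => ENNReal.ofReal_le_ofReal ?_⟩
  · by_contra hnot
    exact hrt.not_ge ((ENNReal.ofReal_le_ofReal_iff hr.le).1
      (h ⟨hr, mt (mem_HLL_charX_iff hg hr.le).1 hnot⟩))
  · exact le_of_not_gt fun hst =>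
      hnot ((mem_HLL_charX_iff hg hs.le).2 (antitone_isTangentMin hst.le h))

lemma TM_eq_image (hg : ContDiff ℝ 2 g) :
    TM g (∇ g) = (fun p : Euc n × ℝ => (charX (∇ g) p.1 p.2, p.2)) '' terminationPairs g := by
  have hpairs {y : Euc n} {t : ℝ} (ht : 0 < t) : (y, t) ∈ terminationPairs g ↔
      ∇ g y ≠ 0 ∧ tbar g (∇ g) y ≤ ENNReal.ofReal t ∧ ENNReal.ofReal t ≤ tsnd g (∇ g) y := by
    rw [tbar_le_ofReal_iff hg.continuous ht.le, ofReal_le_tsnd_iff hg.continuous ht,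
      ← criticalRadius_le_iff antitone_isStrictTangentMin ht.le]
    simp only [terminationPairs, firstTerminating, firstTime, mem_ofPred_eq, and_assoc]
  ext q
  constructor
  · rintro ⟨y, t, hD, -, ht, hbar, hsnd, rfl⟩
    exact ⟨(y, t), (hpairs ht).2 ⟨hD, hbar, hsnd⟩, rfl⟩
  · rintro ⟨⟨y, t⟩, h, rfl⟩
    have ht : 0 < t := (firstTime_pos hg h.1).trans_le h.2.1
    obtain ⟨hD, hbar, hsnd⟩ := (hpairs ht).1 h
    exact ⟨y, t, hD, hbar.trans_lt ENNReal.ofReal_lt_top, ht, hbar, hsnd, rfl⟩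

lemma mem_TM_of_mem_HLL (hg : Differentiable ℝ g) (ht : 0 < t) (hy : y ∈ HLL g x t)
    (hz : z ∈ HLL g x t) (hne : z ≠ y) (hD : ∇ g y ≠ 0) : (x, t) ∈ TM g (∇ g) := by
  obtain rfl := eq_charX_of_mem_HLL hg hy hD
  have hmin := (mem_HLL_charX_iff hg.continuous ht.le).1 hy
  have hbar : tbar g (∇ g) y ≤ ENNReal.ofReal t := by
    refine (tbar_le_ofReal_iff hg.continuous ht.le).2 fun s hts hs => hne ?_
    have hsingle := (HLL_charX_eq_singleton_iff hg.continuous ht.le).2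
      (antitone_isStrictTangentMin hts.le hs)
    exact mem_singleton_iff.1 (hsingle ▸ hz)
  exact ⟨y, t, hD, hbar.trans_lt ENNReal.ofReal_lt_top, ht, hbar,
    (ofReal_le_tsnd_iff hg.continuous ht).2 hmin, rfl⟩

lemma SigmaSet_subset_TM (hg : ContDiff ℝ 1 g) : SigmaSet g ⊆ TM g (∇ g) := by
  rintro ⟨x, t⟩ h
  have hdiff := hg.differentiable one_ne_zero
  obtain ⟨y, hy, z, hz, hne⟩ := exists_gradient_ne_of_mem_SigmaSet hg h
  by_cases hD : ∇ g y = 0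
  · exact mem_TM_of_mem_HLL hdiff h.1 hz hy (ne_of_apply_ne _ hne) (hD ▸ hne.symm)
  · exact mem_TM_of_mem_HLL hdiff h.1 hy hz (ne_of_apply_ne _ hne.symm) hD

lemma exists_HLL_eq_singleton_of_mem_TM (hg : Differentiable ℝ g) (h : (x, t) ∈ TM g (∇ g))
    (hu : DifferentiableAt ℝ (fun q : Euc n × ℝ => HLu g q.1 q.2) (x, t)) :
    ∃ y, HLL g x t = {y} := by
  obtain ⟨y, s, hD, -, hs, -, hsnd, hp⟩ := h
  obtain ⟨rfl, rfl⟩ := Prod.mk.inj hp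
  have hy : y ∈ HLL g (charX (∇ g) y t) t := (mem_HLL_charX_iff hg.continuous hs.le).2
    ((ofReal_le_tsnd_iff hg.continuous hs).1 hsnd)
  refine ⟨y, eq_singleton_iff_unique_mem.2 ⟨hy, fun z hz => ?_⟩⟩
  have hgrad : ∇ g z = ∇ g y := gradient_eq_of_differentiableAt_HLu hg hu hz hy
  have hchar := eq_charX_of_mem_HLL hg hz (hgrad ▸ hD)
  rw [charX, charX, hgrad] at hchar
  exact (add_right_cancel hchar).symm

lemma SigmaSet_union_T1_eq_TM (hg : ContDiff ℝ 1 g) : SigmaSet g ∪ T1 g (∇ g) = TM g (∇ g) := by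
  refine Subset.antisymm (union_subset (SigmaSet_subset_TM hg) (sep_subset _ _)) ?_
  rintro ⟨x, t⟩ h
  have ht : 0 < t := by
    obtain ⟨y, s, -, -, hs, -, -, hp⟩ := h
    exact (Prod.mk.inj hp).2 ▸ hs
  by_cases hu : DifferentiableAt ℝ (fun q : Euc n × ℝ => HLu g q.1 q.2) (x, t)
  · exact .inr ⟨h, exists_HLL_eq_singleton_of_mem_TM (hg.differentiable one_ne_zero) h hu⟩
  · exact .inl ⟨ht, hu⟩

lemma continuousOn_charX (hg : Continuous (∇ g)) :
    ContinuousOn (fun p : Euc n × ℝ => (charX (∇ g) p.1 p.2, p.2)) {p | ∇ g p.1 ≠ 0} := fun _ hp =>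
  ((continuousAt_fst.add (continuousAt_snd.smul
    (continuousAt_gradDir hg.continuousAt hp).fst')).prodMk continuousAt_snd).continuousWithinAt

end HopfLax

theorem SigmaUnionT1_countable_path_components_of_C2 {n : ℕ} (hn : 0 < n) (g : Euc n → ℝ) (Dg : Euc n → Euc n)
    (hg2 : ContDiff ℝ 2 g) (hg : ∀ y, HasGradientAt g (Dg y) y) :
    ∃ 𝒮 : Set (Set (Euc n × ℝ)), 𝒮.Countable ∧
      (∀ C ∈ 𝒮, C.Nonempty ∧ IsPathConnected C) ∧
      𝒮.PairwiseDisjoint id ∧ ⋃₀ 𝒮 = SigmaSet g ∪ T1 g Dg ∧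
      (∀ C ∈ 𝒮, ∀ D : Set (Euc n × ℝ), C ⊆ D → D ⊆ SigmaSet g ∪ T1 g Dg →
        IsPathConnected D → D = C) := by
  obtain rfl : Dg = ∇ g := funext fun y => (hg y).gradient.symm
  have hchar : ContinuousOn (fun p : Euc n × ℝ => (charX (∇ g) p.1 p.2, p.2))
      (terminationPairs g) :=
    (continuousOn_charX (contDiff_gradient hg2).continuous).mono fun _ hp => hp.1.1
  rw [SigmaSet_union_T1_eq_TM (hg2.of_le one_le_two), TM_eq_image hg2]
  exact exists_countable_family_pathComponentIn
    (exists_countable_joinedIn_image hchar (exists_countable_joinedIn_terminationPairs hg2))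
end
end

section
/- Suppose g is twice continuously differentiable (C²). Let y₀ ∈ ℝⁿ with Dg(y₀) ≠ 0 and let t be real with 0 < t < t̄ₛ(y₀). Then the (Fréchet) derivative at y₀ of the map y ↦ y + t·Dg(y)/|Dg(y)| (defined on the open set {y : Dg(y) ≠ 0}) is an invertible linear map ℝⁿ → ℝⁿ; equivalently, det X_y(y₀,t) ≠ 0, so no point on a characteristic strictly before its first termination time is a conjugate point. -/
open scoped InnerProductSpace Topology ENNReal
open Filter

noncomputable section

/-!
Write `p = Dg y₀` and `H = D²g(y₀)`. The derivative of `x ↦ |x|⁻¹ x` at `p` is `|p|⁻¹ P`, with `P`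
the orthogonal projection onto `pᗮ`, so the Jacobian of the characteristic map is `1 + P B` with
`B = (t / |p|) H`.

For some `s > t` the point `y₀` minimizes `g` on the ball of radius `s` centred on its
characteristic, which has `y₀` on its boundary. Testing minimality along parabolas that enter this
ball gives `⟪H w, w⟫ ≥ -(|p| / s) |w|²` for `w ⟂ p`, hence `⟪B w, w⟫ ≥ -(t / s) |w|²` with
`t / s < 1`. So `1 + P B P` is coercive, therefore invertible, and then so is
`1 + P (P B) = 1 + P B`.
-/

theorem deriv_deriv_nonneg_of_isLocalMin {f : ℝ → ℝ} {x : ℝ} (hmin : IsLocalMin f x)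
    (hf : ContinuousAt f x) : 0 ≤ deriv (deriv f) x := by
  by_contra! hneg
  have hmax : IsLocalMax f x := isLocalMax_of_deriv_deriv_neg hneg hmin.deriv_eq_zero hf
  have hconst : f =ᶠ[𝓝 x] fun _ => f x := by
    filter_upwards [hmin, hmax] with y hle hge using le_antisymm hge hle
  have hzero : deriv (deriv f) x = 0 := by simp [hconst.deriv.deriv_eq]
  exact hneg.ne hzero

section Invertibility

theorem isUnit_one_add_mul_comm {R : Type*} [Ring R] (a b : R) :
    IsUnit (1 + a * b) ↔ IsUnit (1 + b * a) := by
  simpa [spectrum.mem_iff, not_iff_not] using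
    spectrum.unit_mem_mul_comm (R := ℤ) (a := -a) (b := b) (r := 1)

variable {E : Type*} [NormedAddCommGroup E] [InnerProductSpace ℝ E] [CompleteSpace E]

theorem isUnit_one_add_starProjection_mul {K : Submodule ℝ E} [K.HasOrthogonalProjection]
    {B : E →L[ℝ] E} {a : ℝ} (ha : a < 1) (hB : ∀ w ∈ K, -(a * ‖w‖ ^ 2) ≤ ⟪B w, w⟫_ℝ) :
    IsUnit (1 + K.starProjection * B) := by
  set P := K.starProjection
  have hPP : P * P = P := K.isIdempotentElem_starProjection
  have hc : 0 < min 1 (1 - a) := lt_min one_pos (sub_pos.mpr ha)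
  have hcoercive : ∀ x, ‖x‖ ^ 2 * min 1 (1 - a) ≤ ⟪(1 + P * B * P) x, x⟫_ℝ := by
    intro x
    have hpyth : ‖x‖ ^ 2 = ‖P x‖ ^ 2 + ‖Kᗮ.starProjection x‖ ^ 2 :=
      K.norm_sq_eq_add_norm_sq_starProjection x
    have hinner : ⟪(1 + P * B * P) x, x⟫_ℝ = ‖x‖ ^ 2 + ⟪B (P x), P x⟫_ℝ := by
      simp [P, inner_add_left, K.inner_starProjection_left_eq_right]
    calc ‖x‖ ^ 2 * min 1 (1 - a)
        = ‖P x‖ ^ 2 * min 1 (1 - a) + ‖Kᗮ.starProjection x‖ ^ 2 * min 1 (1 - a) := by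
          rw [hpyth, add_mul]
      _ ≤ ‖P x‖ ^ 2 * (1 - a) + ‖Kᗮ.starProjection x‖ ^ 2 * 1 := by
          gcongr
          exacts [min_le_right _ _, min_le_left _ _]
      _ = ‖x‖ ^ 2 - a * ‖P x‖ ^ 2 := by rw [hpyth]; ring
      _ ≤ ⟪(1 + P * B * P) x, x⟫_ℝ := by
          rw [hinner]; linarith [hB (P x) (K.starProjection_apply_mem x)]
  have hunit : IsUnit (1 + P * B * P) :=
    ContinuousLinearMap.isUnit_of_forall_le_norm_inner_map _ (c := ⟨_, hc.le⟩) hc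
      fun x => (hcoercive x).trans (Real.le_norm_self _)
  rwa [isUnit_one_add_mul_comm, ← mul_assoc, hPP] at hunit

end Invertibility

section UnitVectorField

variable {E : Type*} [NormedAddCommGroup E] [InnerProductSpace ℝ E]

theorem hasFDerivAt_norm {x : E} (hx : x ≠ 0) :
    HasFDerivAt (fun x : E => ‖x‖) (‖x‖⁻¹ • innerSL ℝ x) x := by
  have hsqrt := (hasStrictFDerivAt_norm_sq x).hasFDerivAt.sqrt (by simpa using hx)
  simp only [Real.sqrt_sq (norm_nonneg _)] at hsqrt
  refine hsqrt.congr_fderiv ?_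
  ext w
  simp only [one_div, mul_inv_rev, smul_apply, coe_innerSL_apply, nsmul_eq_mul, Nat.cast_ofNat,
    smul_eq_mul]
  ring

theorem hasFDerivAt_norm_inv_smul_self {x : E} (hx : x ≠ 0) :
    HasFDerivAt (fun x : E => ‖x‖⁻¹ • x) (‖x‖⁻¹ • (ℝ ∙ x)ᗮ.starProjection) x := by
  have hnorm : ‖x‖ ≠ 0 := norm_ne_zero_iff.mpr hx
  have hinv := (hasDerivAt_inv hnorm).comp_hasFDerivAt x (hasFDerivAt_norm hx)
  refine (hinv.smul (hasFDerivAt_id x)).congr_fderiv ?_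
  ext w
  simp only [Function.comp_apply, neg_smul, id_eq, add_apply, smul_apply, neg_apply, smul_eq_mul,
    ContinuousLinearMap.id_apply, ContinuousLinearMap.smulRight_apply, coe_innerSL_apply,
    Submodule.starProjection_orthogonal_val, Submodule.starProjection_singleton,
    Real.ringHom_apply]
  match_scalars <;> field_simp

theorem hasFDerivAt_add_smul_norm_inv_smul {G : E → E} {G' : E →L[ℝ] E} {y : E}
    (hG : HasFDerivAt G G' y) (hy : G y ≠ 0) (t : ℝ) :
    HasFDerivAt (fun y => y + t • (‖G y‖⁻¹ • G y))
      (1 + (ℝ ∙ G y)ᗮ.starProjection * ((t / ‖G y‖) • G')) y := by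
  have hunit := (hasFDerivAt_norm_inv_smul_self hy).comp y hG
  refine ((hasFDerivAt_id y).add (hunit.const_smul t)).congr_fderiv ?_
  ext w
  simp [div_eq_mul_inv, mul_smul]

end UnitVectorField

section Parabola

/-- The curve through `y` with initial velocity `w` and constant acceleration `2 • v`, along which
minimality on a ball is tested. -/
def parabola {E : Type*} [AddCommGroup E] [Module ℝ E] (y w v : E) (τ : ℝ) : E :=
  y + τ • w + τ ^ 2 • v

@[simp]
theorem parabola_zero {E : Type*} [AddCommGroup E] [Module ℝ E] (y w v : E) :
    parabola y w v 0 = y := by simp [parabola]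

variable {E : Type*} [NormedAddCommGroup E] [NormedSpace ℝ E]

theorem hasDerivAt_parabola (y w v : E) (τ : ℝ) :
    HasDerivAt (parabola y w v) (w + (2 * τ) • v) τ := by
  have hlin : HasDerivAt (fun τ : ℝ => y + τ • w) w τ := by
    simpa using ((hasDerivAt_id τ).smul_const w).const_add y
  have hquad : HasDerivAt (fun τ : ℝ => τ ^ 2 • v) ((2 * τ) • v) τ := by
    simpa using (hasDerivAt_pow 2 τ).smul_const v
  exact hlin.add hquad

theorem tendsto_parabola_zero (y w v : E) : Tendsto (parabola y w v) (𝓝 0) (𝓝 y) := by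
  simpa using (hasDerivAt_parabola y w v 0).continuousAt.tendsto

end Parabola

section SecondOrder

variable {E : Type*} [NormedAddCommGroup E] [InnerProductSpace ℝ E]

theorem eventually_parabola_mem_closedBall {c y w v : E} (hw : ⟪w, c - y⟫_ℝ = 0)
    (hv : ‖w‖ ^ 2 < 2 * ⟪v, c - y⟫_ℝ) :
    ∀ᶠ τ in 𝓝 0, parabola y w v τ ∈ Metric.closedBall c (dist y c) := by
  have hsmall : ∀ᶠ τ : ℝ in 𝓝 0,
      ‖w‖ ^ 2 + 2 * τ * ⟪w, v⟫_ℝ + τ ^ 2 * ‖v‖ ^ 2 < 2 * ⟪v, c - y⟫_ℝ := by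
    have hcont : Continuous fun τ : ℝ => ‖w‖ ^ 2 + 2 * τ * ⟪w, v⟫_ℝ + τ ^ 2 * ‖v‖ ^ 2 := by
      fun_prop
    exact hcont.continuousAt.eventually_lt_const (by simpa using hv)
  filter_upwards [hsmall] with τ hτ
  have hexpand : ‖parabola y w v τ - c‖ ^ 2 = ‖y - c‖ ^ 2 +
      τ ^ 2 * (‖w‖ ^ 2 + 2 * τ * ⟪w, v⟫_ℝ + τ ^ 2 * ‖v‖ ^ 2 - 2 * ⟪v, c - y⟫_ℝ) := by
    have hsub : parabola y w v τ - c = τ • w + τ ^ 2 • v - (c - y) := by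
      rw [parabola]; abel
    rw [hsub, norm_sub_sq_real, norm_add_sq_real, inner_add_left, norm_sub_rev y c]
    simp only [real_inner_smul_left, real_inner_smul_right, hw, norm_smul, mul_pow,
      Real.norm_eq_abs, sq_abs]
    ring
  rw [Metric.mem_closedBall, dist_eq_norm, dist_eq_norm,
    ← sq_le_sq₀ (norm_nonneg _) (norm_nonneg _), hexpand]
  nlinarith [sq_nonneg τ]

variable [CompleteSpace E] {g : E → ℝ} {Dg : E → E} {H : E →L[ℝ] E} {y : E}

theorem deriv_deriv_comp_parabola (hg : ∀ᶠ z in 𝓝 y, HasGradientAt g (Dg z) z)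
    (hDg : HasFDerivAt Dg H y) (w v : E) :
    deriv (deriv (g ∘ parabola y w v)) 0 = ⟪H w, w⟫_ℝ + 2 * ⟪Dg y, v⟫_ℝ := by
  have hfirst : deriv (g ∘ parabola y w v) =ᶠ[𝓝 0]
      fun τ => ⟪(Dg ∘ parabola y w v) τ, w + (2 * τ) • v⟫_ℝ := by
    filter_upwards [(tendsto_parabola_zero y w v).eventually hg] with τ hτ
    simpa using (hτ.hasFDerivAt.comp_hasDerivAt τ (hasDerivAt_parabola y w v τ)).deriv
  have hgrad : HasDerivAt (Dg ∘ parabola y w v) (H w) 0 := by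
    simpa using HasFDerivAt.comp_hasDerivAt (0 : ℝ) (l := Dg) (l' := H) (by simpa using hDg)
      (hasDerivAt_parabola y w v 0)
  have hvel : HasDerivAt (fun τ : ℝ => w + (2 * τ) • v) ((2 : ℝ) • v) 0 := by
    simpa using (((hasDerivAt_id (0 : ℝ)).const_mul 2).smul_const v).const_add w
  rw [hfirst.deriv_eq, (hgrad.inner ℝ hvel).deriv]
  simp [real_inner_smul_right, add_comm]

theorem inner_add_two_mul_inner_nonneg_of_isLocalMinOn {S : Set E}
    (hg : ∀ᶠ z in 𝓝 y, HasGradientAt g (Dg z) z) (hDg : HasFDerivAt Dg H y)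
    (hmin : IsLocalMinOn g S y) {w v : E} (hS : ∀ᶠ τ in 𝓝 0, parabola y w v τ ∈ S) :
    0 ≤ ⟪H w, w⟫_ℝ + 2 * ⟪Dg y, v⟫_ℝ := by
  have htendsto : Tendsto (parabola y w v) (𝓝 0) (𝓝[S] y) :=
    tendsto_nhdsWithin_iff.mpr ⟨tendsto_parabola_zero y w v, hS⟩
  have hcurve : IsLocalMin (g ∘ parabola y w v) 0 := by
    filter_upwards [htendsto.eventually hmin] with τ hτ using by simpa using hτ
  have hcont : ContinuousAt (g ∘ parabola y w v) 0 :=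
    ContinuousAt.comp (by simpa using hg.self_of_nhds.continuousAt)
      (hasDerivAt_parabola y w v 0).continuousAt
  rw [← deriv_deriv_comp_parabola hg hDg]
  exact deriv_deriv_nonneg_of_isLocalMin hcurve hcont

theorem neg_norm_sq_le_mul_inner_of_isLocalMinOn_closedBall
    (hg : ∀ᶠ z in 𝓝 y, HasGradientAt g (Dg z) z) (hDg : HasFDerivAt Dg H y) (hy : Dg y ≠ 0)
    {r : ℝ} (hr : 0 < r)
    (hmin : IsLocalMinOn g (Metric.closedBall (y + r • Dg y) (r * ‖Dg y‖)) y)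
    {w : E} (hw : ⟪w, Dg y⟫_ℝ = 0) : -‖w‖ ^ 2 ≤ r * ⟪H w, w⟫_ℝ := by
  have hnorm : ‖Dg y‖ ≠ 0 := norm_ne_zero_iff.mpr hy
  suffices hbound : ∀ a, ‖w‖ ^ 2 < a → -a ≤ r * ⟪H w, w⟫_ℝ from
    neg_le.mp (le_of_forall_gt_imp_ge_of_dense fun a ha => neg_le.mp (hbound a ha))
  intro a ha
  set v := (a / (2 * r * ‖Dg y‖ ^ 2)) • Dg y with hv
  have hinner : 2 * ⟪Dg y, v⟫_ℝ = a / r := by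
    rw [hv, real_inner_smul_right, real_inner_self_eq_norm_sq]
    field_simp
  have hball : ∀ᶠ τ in 𝓝 0, parabola y w v τ ∈
      Metric.closedBall (y + r • Dg y) (r * ‖Dg y‖) := by
    have hinner' : 2 * ⟪v, y + r • Dg y - y⟫_ℝ = a := by
      rw [add_sub_cancel_left, real_inner_smul_right, real_inner_comm, mul_left_comm, hinner,
        mul_div_cancel₀ a hr.ne']
    simpa [norm_smul, abs_of_pos hr] using
      eventually_parabola_mem_closedBall (c := y + r • Dg y) (y := y)
        (by simp [real_inner_smul_right, hw]) (ha.trans_eq hinner'.symm)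
  have hsecond := inner_add_two_mul_inner_nonneg_of_isLocalMinOn hg hDg hmin hball
  rw [hinner] at hsecond
  calc -a = r * -(a / r) := by field_simp
    _ ≤ r * ⟪H w, w⟫_ℝ := by gcongr; linarith

end SecondOrder

theorem differentiable_of_hasGradientAt_of_contDiff_two {E : Type*} [NormedAddCommGroup E]
    [InnerProductSpace ℝ E] [CompleteSpace E] {g : E → ℝ} {Dg : E → E} (hg2 : ContDiff ℝ 2 g)
    (hg : ∀ y, HasGradientAt g (Dg y) y) : Differentiable ℝ Dg := by
  have hfderiv : Differentiable ℝ (fderiv ℝ g) :=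
    (hg2.fderiv_right (m := 1) (by norm_num)).differentiable one_ne_zero
  rw [← gradient_eq hg]
  exact (InnerProductSpace.toDual ℝ E).symm.differentiable.comp hfderiv

section HopfLax

variable {n : ℕ} {g : Euc n → ℝ}

theorem isMinOn_closedBall_of_mem_HLL (hg : Continuous g) {x y : Euc n} {s : ℝ}
    (hy : y ∈ HLL g x s) : IsMinOn g (Metric.closedBall x s) y := by
  intro z hz
  have hbdd : BddBelow (g '' Metric.closedBall x s) :=
    ((isCompact_closedBall x s).image hg).bddBelow
  exact hy.2.trans_le (csInf_le hbdd (Set.mem_image_of_mem g hz))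

theorem exists_isMinOn_closedBall_charX_of_lt_tbar (hg : Continuous g) {Dg : Euc n → Euc n}
    {y₀ : Euc n} {t : ℝ} (ht : ENNReal.ofReal t < tbar g Dg y₀) :
    ∃ s, t < s ∧ IsMinOn g (Metric.closedBall (charX Dg y₀ s) s) y₀ := by
  obtain ⟨_, ⟨s, ⟨hs, hL⟩, rfl⟩, hts⟩ := lt_sSup_iff.mp ht
  have hy₀ : y₀ ∈ HLL g (charX Dg y₀ s) s := hL ▸ Set.mem_singleton y₀
  exact ⟨s, (ENNReal.ofReal_lt_ofReal_iff hs).mp hts, isMinOn_closedBall_of_mem_HLL hg hy₀⟩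

end HopfLax

theorem no_conjugate_point_before_first_termination_general {E : Type*} [NormedAddCommGroup E]
    [InnerProductSpace ℝ E] [CompleteSpace E] {g : E → ℝ} {Dg : E → E} {y₀ : E}
    (hg : ∀ᶠ y in 𝓝 y₀, HasGradientAt g (Dg y) y) (hDg : DifferentiableAt ℝ Dg y₀)
    (hy : Dg y₀ ≠ 0) {s t : ℝ} (ht : 0 ≤ t) (hts : t < s)
    (hmin : IsLocalMinOn g (Metric.closedBall (y₀ + s • (‖Dg y₀‖⁻¹ • Dg y₀)) s) y₀) :
    DifferentiableAt ℝ (fun y => y + t • (‖Dg y‖⁻¹ • Dg y)) y₀ ∧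
    Function.Bijective ⇑(fderiv ℝ (fun y => y + t • (‖Dg y‖⁻¹ • Dg y)) y₀) := by
  have hs : 0 < s := ht.trans_lt hts
  have hnorm : 0 < ‖Dg y₀‖ := norm_pos_iff.mpr hy
  have hball : Metric.closedBall (y₀ + s • (‖Dg y₀‖⁻¹ • Dg y₀)) s =
      Metric.closedBall (y₀ + (s / ‖Dg y₀‖) • Dg y₀) (s / ‖Dg y₀‖ * ‖Dg y₀‖) := by
    rw [smul_smul, ← div_eq_mul_inv, div_mul_cancel₀ s hnorm.ne']
  have hcurvature : ∀ w ∈ (ℝ ∙ Dg y₀)ᗮ,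
      -(t / s * ‖w‖ ^ 2) ≤ ⟪((t / ‖Dg y₀‖) • fderiv ℝ Dg y₀) w, w⟫_ℝ := by
    intro w hw
    have hsecond := neg_norm_sq_le_mul_inner_of_isLocalMinOn_closedBall hg hDg.hasFDerivAt hy
      (div_pos hs hnorm) (hball ▸ hmin) (Submodule.mem_orthogonal_singleton_iff_inner_left.mp hw)
    calc -(t / s * ‖w‖ ^ 2) = t / s * -‖w‖ ^ 2 := by ring
      _ ≤ t / s * (s / ‖Dg y₀‖ * ⟪fderiv ℝ Dg y₀ w, w⟫_ℝ) := by gcongr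
      _ = ⟪((t / ‖Dg y₀‖) • fderiv ℝ Dg y₀) w, w⟫_ℝ := by
        rw [smul_apply, real_inner_smul_left]
        field_simp
  have hX := hasFDerivAt_add_smul_norm_inv_smul hDg.hasFDerivAt hy t
  refine ⟨hX.differentiableAt, ?_⟩
  rw [hX.fderiv, ← ContinuousLinearMap.isUnit_iff_bijective]
  exact isUnit_one_add_starProjection_mul ((div_lt_one hs).mpr hts) hcurvature

theorem no_conjugate_point_before_first_termination {n : ℕ} (hn : 0 < n) (g : Euc n → ℝ) (Dg : Euc n → Euc n)
    (hg2 : ContDiff ℝ 2 g) (hg : ∀ y, HasGradientAt g (Dg y) y)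
    (y₀ : Euc n) (hy : Dg y₀ ≠ 0) (t : ℝ) (ht : 0 < t)
    (hts : ENNReal.ofReal t < tbar g Dg y₀) :
    DifferentiableAt ℝ (fun y : Euc n => y + t • (‖Dg y‖⁻¹ • Dg y)) y₀ ∧
    Function.Bijective ⇑(fderiv ℝ (fun y : Euc n => y + t • (‖Dg y‖⁻¹ • Dg y)) y₀) := by
  obtain ⟨s, hs, hmin⟩ := exists_isMinOn_closedBall_charX_of_lt_tbar hg2.continuous hts
  exact no_conjugate_point_before_first_termination_general (.of_forall hg)
    (differentiable_of_hasGradientAt_of_contDiff_two hg2 hg y₀) hy ht.le hs hmin.localize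
end
end
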